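/- arXiv:1509.09218 — 4 statements merged into one kernel-verified Lean document; each statement's English description precedes it below -/
import Mathlib

section
/- Let m_K be the normalized Haar probability measure on K = SO(2) ⊆ SL(2,ℝ) and let η be the Borel measure on ℝ with density |t| with respect to Lebesgue measure. Let ν be the Borel measure on G = SL(2,ℝ) obtained as the pushforward of the product measure m_K × η × m_K under the map (k, t, k') ↦ k n_t k'. Then ν is a (left- and right-invariant) Haar measure on SL(2,ℝ), and for every r > 0, ν(B_r) = 2(cosh r − 1), where B_r = {g ∈ G : d(g·i, i) ≤ r}. -/
open MeasureTheory UpperHalfPlane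
open scoped ENNReal

noncomputable section

abbrev G : Type := Matrix.SpecialLinearGroup (Fin 2) ℝ

instance : TopologicalSpace G := instTopologicalSpaceSubtype
instance : MeasurableSpace G := borel G
instance : BorelSpace G := ⟨rfl⟩

/-- The rotation `k_θ ∈ SO(2) ⊆ SL(2,ℝ)`. -/
def kmat (θ : ℝ) : G :=
  ⟨!![Real.cos θ, -Real.sin θ; Real.sin θ, Real.cos θ], by
    rw [Matrix.det_fin_two_of]; nlinarith [Real.sin_sq_add_cos_sq θ]⟩

/-- The unipotent element `n_t ∈ SL(2,ℝ)`. -/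
def nmat (t : ℝ) : G :=
  ⟨!![1, t; 0, 1], by rw [Matrix.det_fin_two_of]; ring⟩

/-- The normalized Haar probability measure of `K = SO(2)`, realized as a measure
on `SL(2,ℝ)`: the pushforward of normalized Lebesgue measure on `[0, 2π)` under
`θ ↦ k_θ`. -/
def mK : Measure G :=
  Measure.map kmat
    ((ENNReal.ofReal (2 * Real.pi))⁻¹ • volume.restrict (Set.Ico 0 (2 * Real.pi)))

/-- The measure `η` on `ℝ` with density `|t|` with respect to Lebesgue measure. -/
def etaMeasure : Measure ℝ := volume.withDensity fun t => ENNReal.ofReal |t|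

/-- The pushforward `ν` of `m_K × η × m_K` under `(k, t, k') ↦ k n_t k'`. -/
def nuKNK : Measure G :=
  Measure.map (fun q : G × ℝ × G => q.1 * nmat q.2.1 * q.2.2)
    (mK.prod (etaMeasure.prod mK))

/-- The hyperbolic ball of radius `r` about the base point `i`, as a subset of `SL(2,ℝ)`. -/
def hypBall (r : ℝ) : Set G := {g : G | dist (g • (I : ℍ)) (I : ℍ) ≤ r}

/-! A `K`-invariant measure on `ℍ` is determined by its image under `z ↦ cosh d(z, i)`, because
`K` acts transitively on the spheres about `i`. For the image of `ν` under `g ↦ g • i` this radial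
law is twice Lebesgue measure on `(1, ∞)`, since `cosh d(n_t • i, i) = 1 + t² / 2`; for hyperbolic
area it is `2π` times Lebesgue measure, by polar coordinates in the disc model. Hence the image of
`ν` on `ℍ` is `π⁻¹` times hyperbolic area, which is `G`-invariant. As `ν` is right `K`-invariant,
it is determined by its image on `ℍ = G / K`, so it is left-invariant; it is also invariant under
inversion, because `n_t⁻¹ = n_{-t}`, hence right-invariant. The ball volumes are the radial law
itself. -/

open Set Function

section InvariantMeasures

/- By `horbit`, `σ (ρ x)` lies in the `H`-orbit of `x`, so averaging over `H` turns every function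
on `X` into a function of `ρ`. -/
theorem eq_of_map_eq_of_measurePreserving {H X Y : Type*} [MeasurableSpace H] [AddGroup H]
    [MeasurableAdd H] [MeasurableSpace X] [MeasurableSpace Y] (m : Measure H)
    [IsProbabilityMeasure m] [m.IsAddRightInvariant] {a : H → X → X} (ha : Measurable (uncurry a))
    {ρ : X → Y} {σ : Y → X} (hρ : Measurable ρ) (hσ : Measurable σ)
    (horbit : ∀ x, ∃ k, ∀ h, a h (σ (ρ x)) = a (h + k) x)
    {μ ν : Measure X} [SFinite μ] [SFinite ν]
    (hμ : ∀ h, MeasurePreserving (a h) μ μ) (hν : ∀ h, MeasurePreserving (a h) ν ν)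
    (hmap : μ.map ρ = ν.map ρ) : μ = ν := by
  have lintegral_eq (κ : Measure X) [SFinite κ] (hκ : ∀ h, MeasurePreserving (a h) κ κ)
      {f : X → ℝ≥0∞} (hf : Measurable f) :
      ∫⁻ x, f x ∂κ = ∫⁻ y, ∫⁻ h, f (a h (σ y)) ∂m ∂κ.map ρ := by
    calc ∫⁻ x, f x ∂κ = ∫⁻ h, ∫⁻ x, f (a h x) ∂κ ∂m := by
          simp only [(hκ _).lintegral_comp hf, lintegral_const, measure_univ, mul_one]
      _ = ∫⁻ x, ∫⁻ h, f (a h x) ∂m ∂κ := lintegral_lintegral_swap (hf.comp ha).aemeasurable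
      _ = ∫⁻ x, ∫⁻ h, f (a h (σ (ρ x))) ∂m ∂κ := by
          refine lintegral_congr fun x => ?_
          obtain ⟨k, hk⟩ := horbit x
          simp only [hk]
          exact (lintegral_add_right_eq_self (fun h => f (a h x)) k).symm
      _ = ∫⁻ y, ∫⁻ h, f (a h (σ y)) ∂m ∂κ.map ρ := by
          rw [lintegral_map _ hρ]
          exact (hf.comp (ha.comp (measurable_snd.prodMk
            (hσ.comp measurable_fst)))).lintegral_prod_right'
  exact Measure.ext_of_lintegral _ fun f hf => by
    rw [lintegral_eq μ hμ hf, lintegral_eq ν hν hf, hmap]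

end InvariantMeasures

section LebesgueIntegrals

lemma lintegral_comp_abs (f : ℝ → ℝ≥0∞) : ∫⁻ t, f |t| = 2 * ∫⁻ t in Ioi (0 : ℝ), f t := by
  have hneg : ∫⁻ t in Iio (0 : ℝ), f |t| = ∫⁻ t in Ioi (0 : ℝ), f |t| := by
    simpa using (Measure.measurePreserving_neg (volume : Measure ℝ)).setLIntegral_comp_preimage_emb
      (MeasurableEquiv.neg ℝ).measurableEmbedding (fun t => f |t|) (Ioi (0 : ℝ))
  calc ∫⁻ t, f |t| = (∫⁻ t in Ioi 0, f |t|) + ∫⁻ t in Iio 0, f |t| := by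
        rw [← lintegral_add_compl _ measurableSet_Ioi, compl_Ioi, restrict_Iio_eq_restrict_Iic]
    _ = 2 * ∫⁻ t in Ioi 0, f t := by
        rw [hneg, ← two_mul]
        congr 1
        exact setLIntegral_congr_fun measurableSet_Ioi fun t ht => by
          simp only [abs_of_pos ht.out]

lemma lintegral_comp_norm {φ : ℝ → ℝ≥0∞} (hφ : Measurable φ) :
    ∫⁻ w : ℂ, φ ‖w‖ =
      ENNReal.ofReal (2 * Real.pi) * ∫⁻ r in Ioi (0 : ℝ), ENNReal.ofReal r * φ r := by
  calc ∫⁻ w : ℂ, φ ‖w‖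
      = ∫⁻ p in Ioi (0 : ℝ) ×ˢ Ioo (-Real.pi) Real.pi, ENNReal.ofReal p.1 * φ p.1 := by
        rw [← Complex.lintegral_comp_polarCoord_symm, polarCoord_target]
        refine setLIntegral_congr_fun (measurableSet_Ioi.prod measurableSet_Ioo) fun p hp => ?_
        simp only [Complex.norm_polarCoord_symm, abs_of_pos hp.1.out, smul_eq_mul]
    _ = ∫⁻ r in Ioi (0 : ℝ), ∫⁻ _ in Ioo (-Real.pi) Real.pi, ENNReal.ofReal r * φ r := by
        rw [Measure.volume_eq_prod, ← Measure.prod_restrict, lintegral_prod _ (by fun_prop)]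
    _ = ENNReal.ofReal (2 * Real.pi) * ∫⁻ r in Ioi (0 : ℝ), ENNReal.ofReal r * φ r := by
        simp only [setLIntegral_const, Real.volume_Ioo, sub_neg_eq_add, ← two_mul]
        rw [lintegral_mul_const _ (by fun_prop), mul_comm]

lemma lintegral_ball_comp_norm {φ : ℝ → ℝ≥0∞} (hφ : Measurable φ) (R : ℝ) :
    ∫⁻ w in Metric.ball (0 : ℂ) R, φ ‖w‖ =
      ENNReal.ofReal (2 * Real.pi) * ∫⁻ r in Ioo 0 R, ENNReal.ofReal r * φ r := by
  have hball : Metric.ball (0 : ℂ) R = (‖·‖) ⁻¹' Iio R := by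
    ext w
    simp
  calc ∫⁻ w in Metric.ball (0 : ℂ) R, φ ‖w‖ = ∫⁻ w : ℂ, (Iio R).indicator φ ‖w‖ := by
        rw [hball, ← lintegral_indicator (measurableSet_Iio.preimage measurable_norm)]
        rfl
    _ = ENNReal.ofReal (2 * Real.pi) *
          ∫⁻ r in Ioi 0, (Iio R).indicator (fun r => ENNReal.ofReal r * φ r) r := by
        rw [lintegral_comp_norm (hφ.indicator measurableSet_Iio)]
        simp only [indicator_mul_right]
    _ = ENNReal.ofReal (2 * Real.pi) * ∫⁻ r in Ioo 0 R, ENNReal.ofReal r * φ r := by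
        rw [setLIntegral_indicator measurableSet_Iio, Iio_inter_Ioi]

lemma lintegral_Ioi_ofReal_mul_comp_one_add_sq_div_two (φ : ℝ → ℝ≥0∞) :
    ∫⁻ t in Ioi (0 : ℝ), ENNReal.ofReal t * φ (1 + t ^ 2 / 2) = ∫⁻ s in Ioi 1, φ s := by
  have himage : (fun t : ℝ => 1 + t ^ 2 / 2) '' Ioi 0 = Ioi 1 := by
    ext s
    constructor
    · rintro ⟨t, ht, rfl⟩
      have := pow_pos ht.out 2
      simp only [mem_Ioi]
      linarith
    · intro hs
      have hs' : 0 < 2 * (s - 1) := by linarith [hs.out]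
      refine ⟨√(2 * (s - 1)), Real.sqrt_pos.mpr hs', ?_⟩
      simp only [Real.sq_sqrt hs'.le]
      ring
  have hmono : MonotoneOn (fun t : ℝ => 1 + t ^ 2 / 2) (Ioi 0) := fun s hs t _ hst => by
    have := pow_le_pow_left₀ hs.out.le hst 2
    simp only
    linarith
  have hderiv (t : ℝ) : HasDerivAt (fun t : ℝ => 1 + t ^ 2 / 2) t t := by
    simpa using ((hasDerivAt_pow 2 t).div_const 2).const_add 1
  rw [← himage, lintegral_image_eq_lintegral_deriv_mul_of_monotoneOn measurableSet_Ioi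
    (fun t _ => (hderiv t).hasDerivWithinAt) hmono]

lemma lintegral_Ioo_ofReal_mul_comp_two_div_one_sub_sq (φ : ℝ → ℝ≥0∞) :
    ∫⁻ r in Ioo (0 : ℝ) 1, ENNReal.ofReal (4 * r / (1 - r ^ 2) ^ 2) * φ (2 / (1 - r ^ 2) - 1) =
      ∫⁻ s in Ioi 1, φ s := by
  have hpos {r : ℝ} (hr : r ∈ Ioo (0 : ℝ) 1) : 0 < 1 - r ^ 2 := by nlinarith [hr.1, hr.2]
  have himage : (fun r : ℝ => 2 / (1 - r ^ 2) - 1) '' Ioo 0 1 = Ioi 1 := by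
    ext s
    constructor
    · rintro ⟨r, hr, rfl⟩
      have := pow_pos hr.1 2
      have : 2 < 2 / (1 - r ^ 2) := (lt_div_iff₀ (hpos hr)).mpr (by linarith)
      simp only [mem_Ioi]
      linarith
    · intro hs
      have hs1 : 0 < s - 1 := sub_pos.mpr hs
      have hs2 : 0 < s + 1 := by linarith
      refine ⟨√((s - 1) / (s + 1)), ⟨Real.sqrt_pos.mpr (by positivity), ?_⟩, ?_⟩
      · rw [Real.sqrt_lt' one_pos, div_lt_iff₀ hs2]
        linarith
      · simp only [Real.sq_sqrt (div_pos hs1 hs2).le]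
        field_simp
        ring
  have hmono : MonotoneOn (fun r : ℝ => 2 / (1 - r ^ 2) - 1) (Ioo 0 1) := fun r hr t ht hrt => by
    have := pow_le_pow_left₀ hr.1.le hrt 2
    have := hpos ht
    simp only
    gcongr
  have hderiv {r : ℝ} (hr : r ∈ Ioo (0 : ℝ) 1) :
      HasDerivAt (fun r : ℝ => 2 / (1 - r ^ 2) - 1) (4 * r / (1 - r ^ 2) ^ 2) r := by
    convert! ((hasDerivAt_const r 2).div ((hasDerivAt_pow 2 r).const_sub 1)
      (hpos hr).ne').sub_const 1 using 1
    simp only [zero_mul, Nat.cast_ofNat, Nat.add_one_sub_one, pow_one, mul_neg, sub_neg_eq_add,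
      zero_add]
    ring
  rw [← himage, lintegral_image_eq_lintegral_deriv_mul_of_monotoneOn measurableSet_Ioo
    (fun r hr => (hderiv hr).hasDerivWithinAt) hmono]

lemma abs_det_toSpanSingleton (c : ℂ) :
    |((ContinuousLinearMap.toSpanSingleton ℂ c).restrictScalars ℝ).det| = ‖c‖ ^ 2 := by
  simp [ContinuousLinearMap.det, LinearMap.det_restrictScalars, Algebra.norm_complex_eq,
    Complex.normSq_eq_norm_sq]

lemma lintegral_upperHalfPlane_eq {F : ℂ → ℝ≥0∞} (hF : Measurable F) :
    ∫⁻ z : ℍ, F z = ∫⁻ z in upperHalfPlaneSet, ENNReal.ofReal ((z.im ^ 2)⁻¹) * F z := by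
  have hdensity (z : ℍ) : (((1 / NNReal.mk z.im z.im_pos.le) ^ 2 : NNReal) : ℝ≥0∞) =
      ENNReal.ofReal ((z.im ^ 2)⁻¹) := by
    rw [← ENNReal.ofReal_coe_nnreal]
    simp
  simp only [volume_def, hdensity]
  rw [lintegral_withDensity_eq_lintegral_mul _ (by fun_prop) (by fun_prop),
    ← range_coe, ← measurableEmbedding_coe.map_comap, measurableEmbedding_coe.lintegral_map]
  rfl

end LebesgueIntegrals

instance : IsTopologicalGroup G := Matrix.SpecialLinearGroup.topologicalGroup

instance : ContinuousSMul G ℍ := instContinuousSMulSL2R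

instance : SecondCountableTopology G :=
  haveI : SecondCountableTopology (Matrix (Fin 2) (Fin 2) ℝ) :=
    inferInstanceAs (SecondCountableTopology (Fin 2 → Fin 2 → ℝ))
  TopologicalSpace.Subtype.secondCountableTopology _

section Rotations

instance : Fact (0 < 2 * Real.pi) := ⟨Real.two_pi_pos⟩

lemma continuous_kmat : Continuous kmat :=
  Continuous.subtype_mk (continuous_matrix fun i j => by
    fin_cases i <;> fin_cases j
    exacts [Real.continuous_cos, Real.continuous_sin.neg, Real.continuous_sin,
      Real.continuous_cos]) _

lemma continuous_nmat : Continuous nmat :=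
  Continuous.subtype_mk (continuous_matrix fun i j => by
    fin_cases i <;> fin_cases j
    exacts [continuous_const, continuous_id, continuous_const, continuous_const]) _

lemma coe_kmat (θ : ℝ) : (kmat θ : Matrix (Fin 2) (Fin 2) ℝ) =
    !![Real.cos θ, -Real.sin θ; Real.sin θ, Real.cos θ] := rfl

lemma coe_nmat (t : ℝ) : (nmat t : Matrix (Fin 2) (Fin 2) ℝ) = !![1, t; 0, 1] := rfl

lemma kmat_add (θ φ : ℝ) : kmat (θ + φ) = kmat θ * kmat φ := by
  apply Subtype.ext
  rw [Matrix.SpecialLinearGroup.coe_mul]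
  simp only [coe_kmat, Matrix.mul_fin_two, Real.cos_add, Real.sin_add]
  ring_nf

lemma kmat_zero : kmat 0 = 1 := by
  apply Subtype.ext
  simp [coe_kmat, Matrix.one_fin_two]

lemma nmat_neg (t : ℝ) : nmat (-t) = (nmat t)⁻¹ := by
  apply Subtype.ext
  rw [Matrix.SpecialLinearGroup.coe_inv]
  simp [coe_nmat, Matrix.adjugate_fin_two]

lemma periodic_kmat : Periodic kmat (2 * Real.pi) := fun θ => by
  apply Subtype.ext
  simp [coe_kmat]

/-- The parametrization of `SO(2)` by the circle, through which rotations form a compact group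
acting on `G` and on `ℍ`. -/
def rot : AddCircle (2 * Real.pi) → G := periodic_kmat.lift

lemma rot_coe (θ : ℝ) : rot θ = kmat θ := periodic_kmat.lift_coe θ

lemma continuous_rot : Continuous rot := continuous_coinduced_dom.mpr continuous_kmat

lemma rot_add (x y : AddCircle (2 * Real.pi)) : rot (x + y) = rot x * rot y := by
  induction x using QuotientAddGroup.induction_on
  induction y using QuotientAddGroup.induction_on
  simp only [← QuotientAddGroup.mk_add, rot_coe, kmat_add]

lemma rot_neg (x : AddCircle (2 * Real.pi)) : rot (-x) = (rot x)⁻¹ := by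
  refine eq_inv_of_mul_eq_one_left ?_
  rw [← rot_add, neg_add_cancel]
  exact (rot_coe 0).trans kmat_zero

lemma measurePreserving_rot : MeasurePreserving rot AddCircle.haarAddCircle mK := by
  refine ⟨continuous_rot.measurable, ?_⟩
  have hpi : ENNReal.ofReal (2 * Real.pi) ≠ 0 := by simp [Real.pi_pos]
  have haar_eq : (AddCircle.haarAddCircle : Measure (AddCircle (2 * Real.pi))) =
      (ENNReal.ofReal (2 * Real.pi))⁻¹ • volume := by
    rw [AddCircle.volume_eq_smul_haarAddCircle, smul_smul,
      ENNReal.inv_mul_cancel hpi ENNReal.ofReal_ne_top, one_smul]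
  have hmk := AddCircle.measurePreserving_mk (2 * Real.pi) 0
  rw [mK, haar_eq, Measure.map_smul, Measure.map_smul, restrict_Ico_eq_restrict_Ioc, ← hmk.map_eq,
    zero_add, Measure.map_map continuous_rot.measurable hmk.measurable]
  rfl

instance : IsProbabilityMeasure mK :=
  measurePreserving_rot.map_eq ▸
    Measure.isProbabilityMeasure_map continuous_rot.measurable.aemeasurable

instance : SFinite etaMeasure := inferInstanceAs (SFinite (volume.withDensity _))

lemma measurePreserving_rot_mul_mK (θ : AddCircle (2 * Real.pi)) :
    MeasurePreserving (rot θ * ·) mK mK :=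
  measurePreserving_rot.of_semiconj (measurePreserving_add_left _ θ)
    (rot_add θ) (measurable_const_mul _)

lemma measurePreserving_mul_rot_mK (θ : AddCircle (2 * Real.pi)) :
    MeasurePreserving (· * rot θ) mK mK :=
  measurePreserving_rot.of_semiconj (measurePreserving_add_right _ θ)
    (rot_add · θ) (measurable_mul_const _)

lemma measurePreserving_inv_mK : MeasurePreserving (·⁻¹ : G → G) mK mK :=
  measurePreserving_rot.of_semiconj (Measure.measurePreserving_neg _) rot_neg measurable_inv

lemma measurePreserving_neg_etaMeasure : MeasurePreserving (-· : ℝ → ℝ) etaMeasure etaMeasure := by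
  refine ⟨measurable_neg, Measure.ext_of_lintegral _ fun f hf => ?_⟩
  rw [lintegral_map hf measurable_neg, etaMeasure,
    lintegral_withDensity_eq_lintegral_mul _ (by fun_prop) hf,
    lintegral_withDensity_eq_lintegral_mul _ (by fun_prop) (by fun_prop),
    ← lintegral_neg_eq_self]
  simp

lemma measurePreserving_knk :
    MeasurePreserving (fun q : G × ℝ × G => q.1 * nmat q.2.1 * q.2.2)
      (mK.prod (etaMeasure.prod mK)) nuKNK :=
  ⟨by have := continuous_nmat.measurable; fun_prop, rfl⟩

lemma measurePreserving_rot_mul_nuKNK (θ : AddCircle (2 * Real.pi)) :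
    MeasurePreserving (rot θ * ·) nuKNK nuKNK :=
  measurePreserving_knk.of_semiconj
    ((measurePreserving_rot_mul_mK θ).prod (.id _))
    (fun q => by simp [mul_assoc]) (measurable_const_mul _)

lemma measurePreserving_mul_rot_nuKNK (θ : AddCircle (2 * Real.pi)) :
    MeasurePreserving (· * rot θ) nuKNK nuKNK :=
  measurePreserving_knk.of_semiconj
    ((MeasurePreserving.id _).prod ((MeasurePreserving.id _).prod (measurePreserving_mul_rot_mK θ)))
    (fun q => by simp [mul_assoc]) (measurable_mul_const _)

lemma measurePreserving_inv_nuKNK : MeasurePreserving (·⁻¹ : G → G) nuKNK nuKNK := by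
  have reverse : MeasurePreserving (fun q : G × ℝ × G => (q.2.2, q.2.1, q.1))
      (mK.prod (etaMeasure.prod mK)) (mK.prod (etaMeasure.prod mK)) :=
    (measurePreserving_prodAssoc mK etaMeasure mK).comp <|
      Measure.measurePreserving_swap.comp <|
        (MeasurePreserving.id mK).prod Measure.measurePreserving_swap
  exact measurePreserving_knk.of_semiconj
    ((measurePreserving_inv_mK.prod
      (measurePreserving_neg_etaMeasure.prod measurePreserving_inv_mK)).comp reverse)
    (fun q => by simp [mul_assoc, nmat_neg]) measurable_inv

instance : SFinite nuKNK := inferInstanceAs (SFinite (Measure.map _ _))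

end Rotations

section Cayley

open Complex (exp arg)

/-- The Cayley transform onto the unit disc, which turns the action of `SO(2)` into rotation
about `0`. -/
def cayley (z : ℍ) : ℂ := (z - Complex.I) / (z + Complex.I)

/-- The inverse Cayley transform, meaningful on the unit disc. -/
def cayleyInv (w : ℂ) : ℂ := Complex.I * (1 + w) / (1 - w)

lemma coe_add_I_ne_zero (z : ℍ) : (z : ℂ) + Complex.I ≠ 0 := fun h => by
  have := congrArg Complex.im h
  simp only [Complex.add_im, Complex.I_im, Complex.zero_im, coe_im] at this
  linarith [z.im_pos]

lemma cayley_injective : Injective cayley := fun z w h => by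
  rw [cayley, cayley, div_eq_div_iff (coe_add_I_ne_zero z) (coe_add_I_ne_zero w)] at h
  have h' : (2 * Complex.I) * z = (2 * Complex.I) * w := by linear_combination h
  exact UpperHalfPlane.ext (mul_left_cancel₀ (by simp) h')

lemma norm_cayley (z : ℍ) : ‖cayley z‖ = Real.tanh (dist z I / 2) := by
  rw [tanh_half_dist, cayley, norm_div, dist_eq_norm, dist_eq_norm]
  simp

lemma coe_kmat_smul (θ : ℝ) (z : ℍ) : ((kmat θ • z : ℍ) : ℂ) =
    (Complex.cos θ * z - Complex.sin θ) / (Complex.sin θ * z + Complex.cos θ) := by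
  rw [coe_specialLinearGroup_apply]
  simp [coe_kmat, sub_eq_add_neg]

lemma cayley_kmat_smul (θ : ℝ) (z : ℍ) :
    cayley (kmat θ • z) = exp (-(2 * θ * Complex.I)) * cayley z := by
  have hden : Complex.sin θ * z + Complex.cos θ ≠ 0 := by
    simpa [denom, coe_kmat] using denom_ne_zero (kmat θ : GL (Fin 2) ℝ) z
  have hexp : exp (-(2 * θ * Complex.I)) = exp (-θ * Complex.I) / exp (θ * Complex.I) := by
    rw [← Complex.exp_sub]
    ring_nf
  rw [cayley, cayley, coe_kmat_smul, hexp, div_mul_div_comm, div_sub' hden, div_add' _ _ _ hden,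
    div_div_div_cancel_right₀ hden, Complex.exp_mul_I, Complex.exp_mul_I, Complex.cos_neg,
    Complex.sin_neg]
  congr 1 <;> ring_nf <;> simp only [Complex.I_sq] <;> ring

lemma kmat_smul_I (θ : ℝ) : kmat θ • I = I :=
  cayley_injective <| by rw [cayley_kmat_smul]; simp [cayley]

theorem exists_kmat_smul_eq {z w : ℍ} (h : dist z I = dist w I) : ∃ θ, kmat θ • z = w := by
  have hnorm : ‖cayley z‖ = ‖cayley w‖ := by rw [norm_cayley, norm_cayley, h]
  refine ⟨(arg (cayley z) - arg (cayley w)) / 2, cayley_injective ?_⟩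
  calc cayley (kmat ((arg (cayley z) - arg (cayley w)) / 2) • z)
      = exp (arg (cayley w) * Complex.I - arg (cayley z) * Complex.I) *
          (‖cayley z‖ * exp (arg (cayley z) * Complex.I)) := by
        rw [cayley_kmat_smul, Complex.norm_mul_exp_arg_mul_I]
        push_cast
        ring_nf
    _ = ‖cayley w‖ * exp (arg (cayley w) * Complex.I) := by
        rw [mul_left_comm, ← Complex.exp_add, sub_add_cancel, hnorm]
    _ = cayley w := Complex.norm_mul_exp_arg_mul_I _

lemma cosh_dist_nmat_smul_I (t : ℝ) : Real.cosh (dist (nmat t • I) I) = 1 + t ^ 2 / 2 := by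
  have hcoe : ((nmat t • I : ℍ) : ℂ) = Complex.I + t := by
    rw [coe_specialLinearGroup_apply]
    simp [coe_nmat]
  have him : (nmat t • I).im = 1 := by
    simpa using congrArg Complex.im hcoe
  simp [cosh_dist, hcoe, him, dist_eq_norm]

theorem exists_eq_kmat_of_smul_I_eq {g : G} (hg : g • I = I) : ∃ θ, g = kmat θ := by
  have hcoe := congrArg UpperHalfPlane.coe hg
  have hden : (g 1 0 : ℂ) * Complex.I + g 1 1 ≠ 0 := by
    simpa [denom] using denom_ne_zero (g : GL (Fin 2) ℝ) I
  rw [coe_specialLinearGroup_apply, div_eq_iff (by simpa using hden)] at hcoe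
  have h01 : g 0 1 = -g 1 0 := by simpa using congrArg Complex.re hcoe
  have h00 : g 0 0 = g 1 1 := by simpa using congrArg Complex.im hcoe
  have hdet : g 0 0 ^ 2 + g 1 0 ^ 2 = 1 := by
    have := g.det_coe
    rw [Matrix.det_fin_two, h01, ← h00] at this
    linarith
  have hnorm : ‖(⟨g 0 0, g 1 0⟩ : ℂ)‖ = 1 := by
    rw [Complex.norm_eq_sqrt_sq_add_sq, hdet, Real.sqrt_one]
  obtain ⟨θ, hθ⟩ := (Complex.norm_eq_one_iff _).mp hnorm
  rw [Complex.exp_mul_I, ← Complex.ofReal_cos, ← Complex.ofReal_sin] at hθ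
  have hcos : Real.cos θ = g 0 0 := by
    simpa [-Complex.ofReal_cos, -Complex.ofReal_sin] using congrArg Complex.re hθ
  have hsin : Real.sin θ = g 1 0 := by
    simpa [-Complex.ofReal_cos, -Complex.ofReal_sin] using congrArg Complex.im hθ
  refine ⟨θ, Subtype.ext ?_⟩
  rw [coe_kmat, hcos, hsin, ← h01]
  nth_rw 2 [h00]
  exact Matrix.eta_fin_two _

theorem exists_eq_mul_kmat {g h : G} (hgh : g • I = h • I) : ∃ θ, h = g * kmat θ := by
  obtain ⟨θ, hθ⟩ := exists_eq_kmat_of_smul_I_eq (g := g⁻¹ * h) (by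
    rw [mul_smul, ← hgh, inv_smul_smul])
  exact ⟨θ, eq_mul_of_inv_mul_eq hθ⟩

lemma one_sub_norm_sq_pos {w : ℂ} (hw : w ∈ Metric.ball (0 : ℂ) 1) : 0 < 1 - ‖w‖ ^ 2 := by
  rw [mem_ball_zero_iff] at hw
  nlinarith [norm_nonneg w]

lemma im_cayleyInv (w : ℂ) : (cayleyInv w).im = (1 - ‖w‖ ^ 2) / ‖1 - w‖ ^ 2 := by
  simp only [cayleyInv, Complex.div_im, Complex.mul_im, Complex.I_re, Complex.add_im,
    Complex.one_im, zero_add, zero_mul, Complex.I_im, Complex.add_re, Complex.one_re, one_mul,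
    Complex.sub_re, Complex.normSq_apply, Complex.sub_im, zero_sub, mul_neg, neg_mul, neg_neg,
    Complex.mul_re, ← Complex.normSq_eq_norm_sq]
  ring

lemma one_sub_ne_zero_of_mem_ball {w : ℂ} (hw : w ∈ Metric.ball (0 : ℂ) 1) : 1 - w ≠ 0 := by
  intro h
  simp [← sub_eq_zero.mp h] at hw

lemma injOn_cayleyInv : InjOn cayleyInv (Metric.ball 0 1) := fun w hw u hu h => by
  rw [cayleyInv, cayleyInv, div_eq_div_iff (one_sub_ne_zero_of_mem_ball hw)
    (one_sub_ne_zero_of_mem_ball hu)] at h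
  exact mul_left_cancel₀ (mul_ne_zero two_ne_zero Complex.I_ne_zero) (by linear_combination h)

lemma cayleyInv_cayley (z : ℍ) : cayleyInv (cayley z) = z := by
  have h := coe_add_I_ne_zero z
  rw [cayleyInv, cayley]
  field_simp
  ring

lemma hasDerivAt_cayleyInv {w : ℂ} (hw : w ∈ Metric.ball (0 : ℂ) 1) :
    HasDerivAt cayleyInv (2 * Complex.I / (1 - w) ^ 2) w := by
  convert! (((hasDerivAt_id w).const_add 1).const_mul Complex.I).div
    ((hasDerivAt_id w).const_sub 1) (one_sub_ne_zero_of_mem_ball hw) using 1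
  simp only [mul_one, id_eq, mul_neg, sub_neg_eq_add]
  ring

lemma norm_cayley_lt_one (z : ℍ) : ‖cayley z‖ < 1 := by
  rw [norm_cayley]
  exact Real.tanh_lt_one _

lemma image_cayleyInv : cayleyInv '' Metric.ball 0 1 = upperHalfPlaneSet := by
  ext z
  constructor
  · rintro ⟨w, hw, rfl⟩
    have := norm_pos_iff.mpr (one_sub_ne_zero_of_mem_ball hw)
    have := one_sub_norm_sq_pos hw
    rw [mem_ofPred_eq, im_cayleyInv]
    positivity
  · exact fun hz => ⟨cayley ⟨z, hz⟩, by simpa using norm_cayley_lt_one _, cayleyInv_cayley ⟨z, hz⟩⟩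

end Cayley

section RadialLaws

theorem map_etaMeasure :
    etaMeasure.map (fun t => 1 + t ^ 2 / 2) = (2 : ℝ≥0∞) • volume.restrict (Ioi (1 : ℝ)) := by
  refine Measure.ext_of_lintegral _ fun φ hφ => ?_
  rw [lintegral_map hφ (by fun_prop), etaMeasure,
    lintegral_withDensity_eq_lintegral_mul _ (by fun_prop) (by fun_prop), lintegral_smul_measure,
    smul_eq_mul, ← lintegral_Ioi_ofReal_mul_comp_one_add_sq_div_two, ← lintegral_comp_abs]
  simp only [Pi.mul_apply, sq_abs]

lemma lintegral_upperHalfPlaneSet_eq_lintegral_ball (F : ℂ → ℝ≥0∞) :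
    ∫⁻ z in upperHalfPlaneSet, ENNReal.ofReal ((z.im ^ 2)⁻¹) * F z =
      ∫⁻ w in Metric.ball (0 : ℂ) 1, ENNReal.ofReal (4 / (1 - ‖w‖ ^ 2) ^ 2) * F (cayleyInv w) := by
  rw [← image_cayleyInv, lintegral_image_eq_lintegral_abs_det_fderiv_mul volume
    Metric.isOpen_ball.measurableSet
    (fun w hw => ((hasDerivAt_cayleyInv hw).hasFDerivAt.restrictScalars ℝ).hasFDerivWithinAt)
    injOn_cayleyInv]
  refine setLIntegral_congr_fun Metric.isOpen_ball.measurableSet fun w hw => ?_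
  simp only [abs_det_toSpanSingleton, im_cayleyInv]
  rw [← mul_assoc, ← ENNReal.ofReal_mul (by positivity)]
  congr 2
  have := norm_ne_zero_iff.mpr (one_sub_ne_zero_of_mem_ball hw)
  simp only [Complex.norm_div, Complex.norm_mul, Complex.norm_ofNat, Complex.norm_I, mul_one,
    norm_pow]
  field_simp
  norm_num

lemma cosh_dist_I (z : ℍ) :
    Real.cosh (dist z I) = 1 + ‖(z - Complex.I : ℂ)‖ ^ 2 / (2 * (z : ℂ).im) := by
  simp [cosh_dist, dist_eq_norm]

lemma one_add_norm_cayleyInv_sub_I_sq_div {w : ℂ} (hw : w ∈ Metric.ball (0 : ℂ) 1) :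
    1 + ‖cayleyInv w - Complex.I‖ ^ 2 / (2 * (cayleyInv w).im) = 2 / (1 - ‖w‖ ^ 2) - 1 := by
  have hne := one_sub_ne_zero_of_mem_ball hw
  have hnorm := norm_ne_zero_iff.mpr hne
  have hpos := one_sub_norm_sq_pos hw
  have hsub : cayleyInv w - Complex.I = 2 * Complex.I * w / (1 - w) := by
    rw [cayleyInv]
    field_simp
    ring
  have hsub_norm : ‖cayleyInv w - Complex.I‖ = 2 * ‖w‖ / ‖1 - w‖ := by
    simp [hsub]
  rw [hsub_norm, im_cayleyInv]
  field_simp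
  ring

theorem map_volume_cosh_dist :
    (volume : Measure ℍ).map (fun z => Real.cosh (dist z I)) =
      ENNReal.ofReal (2 * Real.pi) • volume.restrict (Ioi 1) := by
  refine Measure.ext_of_lintegral _ fun φ hφ => ?_
  have hm : Measurable fun z : ℍ => Real.cosh (dist z I) := by fun_prop
  calc ∫⁻ s, φ s ∂(volume : Measure ℍ).map (fun z => Real.cosh (dist z I))
      = ∫⁻ z : ℍ, φ (1 + ‖(z - Complex.I : ℂ)‖ ^ 2 / (2 * (z : ℂ).im)) := by
        rw [lintegral_map hφ hm]
        simp only [cosh_dist_I]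
    _ = ∫⁻ w in Metric.ball (0 : ℂ) 1,
          ENNReal.ofReal (4 / (1 - ‖w‖ ^ 2) ^ 2) * φ (2 / (1 - ‖w‖ ^ 2) - 1) := by
        rw [lintegral_upperHalfPlane_eq (F := fun z => φ (1 + ‖z - Complex.I‖ ^ 2 / (2 * z.im)))
          (by fun_prop), lintegral_upperHalfPlaneSet_eq_lintegral_ball]
        exact setLIntegral_congr_fun Metric.isOpen_ball.measurableSet fun w hw => by
          simp only [one_add_norm_cayleyInv_sub_I_sq_div hw]
    _ = ENNReal.ofReal (2 * Real.pi) * ∫⁻ r in Ioo (0 : ℝ) 1,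
          ENNReal.ofReal (4 * r / (1 - r ^ 2) ^ 2) * φ (2 / (1 - r ^ 2) - 1) := by
        rw [lintegral_ball_comp_norm (φ := fun r => ENNReal.ofReal (4 / (1 - r ^ 2) ^ 2) *
          φ (2 / (1 - r ^ 2) - 1)) (by fun_prop)]
        congr 1
        refine setLIntegral_congr_fun measurableSet_Ioo fun r hr => ?_
        rw [← mul_assoc, ← ENNReal.ofReal_mul hr.1.le]
        ring_nf
    _ = ∫⁻ s, φ s ∂ENNReal.ofReal (2 * Real.pi) • volume.restrict (Ioi 1) := by
        rw [lintegral_Ioo_ofReal_mul_comp_two_div_one_sub_sq, lintegral_smul_measure, smul_eq_mul]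

lemma ae_mK_smul_I : ∀ᵐ k ∂mK, k • I = I := by
  rw [mK, ae_map_iff continuous_kmat.measurable.aemeasurable
    (isClosed_eq (by fun_prop) continuous_const).measurableSet]
  exact .of_forall kmat_smul_I

theorem map_nuKNK_cosh_dist :
    nuKNK.map (fun g => Real.cosh (dist (g • I) I)) = (2 : ℝ≥0∞) • volume.restrict (Ioi 1) := by
  have hm : Measurable fun g : G => Real.cosh (dist (g • I) I) := by fun_prop
  have hknk : (fun q : G × ℝ × G => Real.cosh (dist ((q.1 * nmat q.2.1 * q.2.2) • I) I))
      =ᵐ[mK.prod (etaMeasure.prod mK)] fun q => 1 + q.2.1 ^ 2 / 2 := by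
    filter_upwards [Measure.quasiMeasurePreserving_fst.ae ae_mK_smul_I,
      Measure.quasiMeasurePreserving_snd.ae (Measure.quasiMeasurePreserving_snd.ae ae_mK_smul_I)]
      with q hk hk'
    have hdist : dist ((q.1 * nmat q.2.1 * q.2.2) • I) I = dist (nmat q.2.1 • I) I := by
      rw [mul_smul, hk', mul_smul]
      nth_rw 2 [← hk]
      exact dist_smul _ _ _
    rw [hdist, cosh_dist_nmat_smul_I]
  have hproj : MeasurePreserving (fun q : G × ℝ × G => q.2.1)
      (mK.prod (etaMeasure.prod mK)) etaMeasure :=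
    measurePreserving_fst.comp measurePreserving_snd
  calc nuKNK.map (fun g => Real.cosh (dist (g • I) I))
      = (mK.prod (etaMeasure.prod mK)).map fun q => 1 + q.2.1 ^ 2 / 2 :=
        (Measure.map_map hm measurePreserving_knk.measurable).trans (Measure.map_congr hknk)
    _ = etaMeasure.map fun t => 1 + t ^ 2 / 2 := by
        rw [← hproj.map_eq, Measure.map_map (by fun_prop) hproj.measurable, hproj.map_eq]
        rfl
    _ = (2 : ℝ≥0∞) • volume.restrict (Ioi 1) := map_etaMeasure

end RadialLaws

section HaarMeasure

instance : SMulInvariantMeasure G ℍ volume :=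
  ⟨fun g _ hs => SMulInvariantMeasure.measure_preimage_smul (g : GL (Fin 2) ℝ) hs⟩

lemma map_cosh_dist_map_nuKNK_smul_I :
    (nuKNK.map (· • I)).map (fun z => Real.cosh (dist z I)) =
      ((ENNReal.ofReal Real.pi)⁻¹ • volume : Measure ℍ).map (fun z => Real.cosh (dist z I)) := by
  have hpi : ENNReal.ofReal Real.pi ≠ 0 := by simp [Real.pi_pos]
  rw [Measure.map_map (by fun_prop) (by fun_prop), Measure.map_smul, map_volume_cosh_dist,
    smul_smul, mul_comm 2, ENNReal.ofReal_mul Real.pi_pos.le, ← mul_assoc,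
    ENNReal.inv_mul_cancel hpi ENNReal.ofReal_ne_top, one_mul, ENNReal.ofReal_ofNat]
  exact map_nuKNK_cosh_dist

lemma exists_rot_smul_nmat_smul_I_eq (z : ℍ) : ∃ φ : AddCircle (2 * Real.pi), ∀ θ,
    rot θ • nmat √(2 * (Real.cosh (dist z I) - 1)) • I = rot (θ + φ) • z := by
  obtain ⟨φ, hφ⟩ : ∃ φ, kmat φ • z = nmat √(2 * (Real.cosh (dist z I) - 1)) • I := by
    refine exists_kmat_smul_eq (Real.cosh_injOn dist_nonneg dist_nonneg ?_)
    rw [cosh_dist_nmat_smul_I, Real.sq_sqrt (by linarith [Real.one_le_cosh (dist z I)])]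
    ring
  exact ⟨φ, fun θ => by rw [rot_add, mul_smul, rot_coe, hφ]⟩

theorem measurePreserving_smul_I :
    MeasurePreserving (· • I : G → ℍ) nuKNK ((ENNReal.ofReal Real.pi)⁻¹ • volume) := by
  have hsmul : Measurable fun g : G => g • I := by fun_prop
  have hrot := continuous_rot.measurable
  refine ⟨hsmul, eq_of_map_eq_of_measurePreserving AddCircle.haarAddCircle
    (a := fun θ z => rot θ • z) (by fun_prop) (by fun_prop)
    (σ := fun s => nmat √(2 * (s - 1)) • I) (by have := continuous_nmat.measurable; fun_prop)
    exists_rot_smul_nmat_smul_I_eq (fun θ => ?_) (fun θ => ?_) map_cosh_dist_map_nuKNK_smul_I⟩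
  · exact (⟨hsmul, rfl⟩ : MeasurePreserving (· • I) nuKNK _).of_semiconj
      (measurePreserving_rot_mul_nuKNK θ) (fun g => mul_smul _ _ _) (measurable_const_smul _)
  · exact measurePreserving_smul _ _

lemma measurable_toSL2R : Measurable (toSL2R : ℍ → G) :=
  Continuous.measurable (γ := G) continuous_toSL2R

theorem map_mul_left_nuKNK (g₀ : G) : nuKNK.map (g₀ * ·) = nuKNK := by
  have hsmul : Measurable fun g : G => g • I := by fun_prop
  have hrot := continuous_rot.measurable
  have htranslate : MeasurePreserving (g₀ * ·) nuKNK (nuKNK.map (g₀ * ·)) :=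
    ⟨measurable_const_mul g₀, rfl⟩
  have himage : (nuKNK.map (g₀ * ·)).map (· • I) = nuKNK.map (· • I) := by
    rw [measurePreserving_smul_I.map_eq, Measure.map_map hsmul htranslate.measurable]
    simpa only [comp_def, mul_smul] using
      ((measurePreserving_smul g₀ _).comp measurePreserving_smul_I).map_eq
  have horbit (g : G) : ∃ φ : AddCircle (2 * Real.pi), ∀ θ,
      toSL2R (g • I) * rot θ = g * rot (θ + φ) := by
    obtain ⟨φ, hφ⟩ : ∃ φ, toSL2R (g • I) = g * kmat φ := exists_eq_mul_kmat (toSL2R_smul_I _).symm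
    exact ⟨φ, fun θ => by rw [hφ, add_comm, rot_add, mul_assoc, rot_coe]⟩
  exact eq_of_map_eq_of_measurePreserving AddCircle.haarAddCircle
    (a := fun θ g => g * rot θ) (by fun_prop) hsmul measurable_toSL2R horbit
    (fun θ => htranslate.of_semiconj (measurePreserving_mul_rot_nuKNK θ)
      (fun g => (mul_assoc _ _ _).symm) (measurable_mul_const _))
    measurePreserving_mul_rot_nuKNK himage

instance : nuKNK.IsMulLeftInvariant := ⟨map_mul_left_nuKNK⟩

instance : nuKNK.IsMulRightInvariant :=
  measurePreserving_inv_nuKNK.map_eq ▸ Measure.inv.instIsMulRightInvariant (μ := nuKNK)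

theorem nuKNK_hypBall {r : ℝ} (hr : 0 ≤ r) :
    nuKNK (hypBall r) = ENNReal.ofReal (2 * (Real.cosh r - 1)) := by
  have hball : hypBall r = (fun g => Real.cosh (dist (g • I) I)) ⁻¹' Iic (Real.cosh r) := by
    ext g
    rw [mem_preimage, mem_Iic, Real.cosh_le_cosh, abs_of_nonneg dist_nonneg, abs_of_nonneg hr]
    rfl
  rw [hball, ← Measure.map_apply (by fun_prop) measurableSet_Iic, map_nuKNK_cosh_dist,
    Measure.smul_apply, Measure.restrict_apply measurableSet_Iic, Iic_inter_Ioi, Real.volume_Ioc,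
    ENNReal.ofReal_mul two_pos.le, ENNReal.ofReal_ofNat, smul_eq_mul]

theorem isCompact_hypBall (r : ℝ) : IsCompact (hypBall r) :=
  isProperMap_smul_I.isCompact_preimage (isCompact_closedBall I r)

theorem nonempty_interior_hypBall {r : ℝ} (hr : 0 < r) : (interior (hypBall r)).Nonempty := by
  have hopen : IsOpen {g : G | dist (g • I) I < r} := isOpen_lt (by fun_prop) continuous_const
  exact ⟨1, interior_maximal (fun g (hg : dist (g • I) I < r) => hg.le) hopen
    (show dist ((1 : G) • I) I < r by simpa using hr)⟩

end HaarMeasure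

/-- **`KNK` decomposition of Haar measure on `SL(2,ℝ)`.**  The pushforward of
`m_K × η × m_K` under `(k, t, k') ↦ k n_t k'` is a (left- and right-invariant) Haar
measure on `SL(2,ℝ)`, and it gives each hyperbolic ball `B_r` `(r > 0)` the measure
`2 (cosh r − 1)`. -/
theorem nuKNK_isHaarMeasure_and_ball_volume :
    Measure.IsHaarMeasure nuKNK ∧ Measure.IsMulRightInvariant nuKNK ∧
      ∀ r : ℝ, 0 < r → nuKNK (hypBall r) = ENNReal.ofReal (2 * (Real.cosh r - 1)) := by
  refine ⟨?_, inferInstance, fun r hr => nuKNK_hypBall hr.le⟩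
  refine Measure.isHaarMeasure_of_isCompact_nonempty_interior nuKNK (hypBall 1)
    (isCompact_hypBall 1) (nonempty_interior_hypBall one_pos) ?_ ?_ <;>
  rw [nuKNK_hypBall zero_le_one]
  · simp
  · exact ENNReal.ofReal_ne_top
end
end

section
/- Suppose θ, θ' : (0,∞) → ℝ are functions such that for every r > 0 the matrix identity k_{θ(r)} a_r k_{θ'(r)} = n_{t(r)} holds in SL(2,ℝ), where t(r) = 2 sinh(r/2). Then cos²θ(r) → 1 and cos²θ'(r) → 0 as r → ∞ (i.e. the first Cartan angular component tends to the identity rotation and the second tends to a quarter-turn, which acts on the hyperbolic plane as a 180° rotation). -/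
open Filter Topology

noncomputable section

/-- The diagonal element `a_s = diag(e^{s/2}, e^{-s/2}) ∈ SL(2,ℝ)`. -/
def amat (s : ℝ) : G :=
  ⟨!![Real.exp (s / 2), 0; 0, Real.exp (-s / 2)], by
    rw [Matrix.det_fin_two_of, ← Real.exp_add, show s / 2 + -s / 2 = (0:ℝ) by ring,
      Real.exp_zero]; ring⟩

/-!
Write `M = k_α a_r k_β`. As rotations are orthogonal, `‖M e₁‖ = ‖a_r k_β e₁‖` and
`‖Mᵀ e₂‖ = ‖a_r k_αᵀ e₂‖`, that is,
`‖M e₁‖² = e^r cos² β + e^{-r} sin² β` and `‖Mᵀ e₂‖² = e^r sin² α + e^{-r} cos² α`.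
A unipotent `M = n_t` fixes `e₁` and its transpose fixes `e₂`, so both quantities are `1`.
For `r ≠ 0` this determines `cos² β = sin² α = 1 / (1 + e^r)`, which tends to `0` as `r → ∞`.
-/

lemma coe_kmat_mul_amat_mul_kmat (α r β : ℝ) :
    ((kmat α * amat r * kmat β : G) : Matrix (Fin 2) (Fin 2) ℝ) =
      !![Real.exp (r / 2) * Real.cos α * Real.cos β - Real.exp (-r / 2) * Real.sin α * Real.sin β,
        -(Real.exp (r / 2) * Real.cos α * Real.sin β + Real.exp (-r / 2) * Real.sin α * Real.cos β);
        Real.exp (r / 2) * Real.sin α * Real.cos β + Real.exp (-r / 2) * Real.cos α * Real.sin β,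
        Real.exp (-r / 2) * Real.cos α * Real.cos β -
          Real.exp (r / 2) * Real.sin α * Real.sin β] := by
  rw [Matrix.SpecialLinearGroup.coe_mul, Matrix.SpecialLinearGroup.coe_mul, kmat, amat, kmat,
    Matrix.mul_fin_two, Matrix.mul_fin_two]
  ring_nf

lemma sq_exp_half (x : ℝ) : Real.exp (x / 2) ^ 2 = Real.exp x := by
  rw [Real.exp_half, Real.sq_sqrt (Real.exp_pos x).le]

lemma sq_add_sq_col_zero_kmat_mul_amat_mul_kmat (α r β : ℝ) :
    (kmat α * amat r * kmat β) 0 0 ^ 2 + (kmat α * amat r * kmat β) 1 0 ^ 2 =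
      Real.exp r * Real.cos β ^ 2 + Real.exp (-r) * Real.sin β ^ 2 := by
  simp only [coe_kmat_mul_amat_mul_kmat, ← sq_exp_half r, ← sq_exp_half (-r), Matrix.of_apply,
    Matrix.cons_val_zero, Matrix.cons_val_one]
  linear_combination (Real.exp (r / 2) ^ 2 * Real.cos β ^ 2 +
    Real.exp (-r / 2) ^ 2 * Real.sin β ^ 2) * Real.sin_sq_add_cos_sq α

lemma sq_add_sq_row_one_kmat_mul_amat_mul_kmat (α r β : ℝ) :
    (kmat α * amat r * kmat β) 1 0 ^ 2 + (kmat α * amat r * kmat β) 1 1 ^ 2 =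
      Real.exp r * Real.sin α ^ 2 + Real.exp (-r) * Real.cos α ^ 2 := by
  simp only [coe_kmat_mul_amat_mul_kmat, ← sq_exp_half r, ← sq_exp_half (-r), Matrix.of_apply,
    Matrix.cons_val_zero, Matrix.cons_val_one]
  linear_combination (Real.exp (r / 2) ^ 2 * Real.sin α ^ 2 +
    Real.exp (-r / 2) ^ 2 * Real.cos α ^ 2) * Real.sin_sq_add_cos_sq β

lemma eq_sigmoid_neg_of_exp_mul_add_exp_neg_mul_eq_one {r x : ℝ} (hr : r ≠ 0)
    (h : Real.exp r * x + Real.exp (-r) * (1 - x) = 1) : x = Real.sigmoid (-r) := by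
  have hexp : Real.exp r - 1 ≠ 0 := sub_ne_zero.2 ((Real.exp_eq_one_iff r).not.2 hr)
  have hfactor : (Real.exp r - 1) * (x * (1 + Real.exp r)) = (Real.exp r - 1) * 1 := by
    rw [Real.exp_neg] at h
    field_simp at h
    linear_combination h
  rw [Real.sigmoid_def, neg_neg]
  exact eq_inv_of_mul_eq_one_left (mul_left_cancel₀ hexp hfactor)

section UnipotentCartan

variable {r t α β : ℝ}

theorem cos_sq_left_of_kmat_mul_amat_mul_kmat_eq_nmat (hr : r ≠ 0)
    (h : kmat α * amat r * kmat β = nmat t) : Real.cos α ^ 2 = Real.sigmoid r := by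
  have hrow := sq_add_sq_row_one_kmat_mul_amat_mul_kmat α r β
  rw [h, Real.cos_sq'] at hrow
  have hsin := eq_sigmoid_neg_of_exp_mul_add_exp_neg_mul_eq_one hr
    (hrow.symm.trans (by simp [nmat]))
  rw [Real.cos_sq', hsin, Real.sigmoid_neg, sub_sub_cancel]

theorem cos_sq_right_of_kmat_mul_amat_mul_kmat_eq_nmat (hr : r ≠ 0)
    (h : kmat α * amat r * kmat β = nmat t) : Real.cos β ^ 2 = Real.sigmoid (-r) := by
  have hcol := sq_add_sq_col_zero_kmat_mul_amat_mul_kmat α r β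
  rw [h, Real.sin_sq] at hcol
  exact eq_sigmoid_neg_of_exp_mul_add_exp_neg_mul_eq_one hr
    (hcol.symm.trans (by simp [nmat]))

end UnipotentCartan

theorem cartan_angles_tendsto_general {ι : Type*} {l : Filter ι} {s t θ θ' : ι → ℝ}
    (hs : Tendsto s l atTop)
    (h : ∀ᶠ i in l, kmat (θ i) * amat (s i) * kmat (θ' i) = nmat (t i)) :
    Tendsto (fun i => Real.cos (θ i) ^ 2) l (𝓝 1) ∧
      Tendsto (fun i => Real.cos (θ' i) ^ 2) l (𝓝 0) := by
  have hne : ∀ᶠ i in l, s i ≠ 0 := hs.eventually_ne_atTop 0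
  constructor
  · refine (Real.tendsto_sigmoid_atTop.comp hs).congr' ?_
    filter_upwards [hne, h] with i hi hcartan using
      (cos_sq_left_of_kmat_mul_amat_mul_kmat_eq_nmat hi hcartan).symm
  · refine (Real.tendsto_sigmoid_atBot.comp (tendsto_neg_atTop_atBot.comp hs)).congr' ?_
    filter_upwards [hne, h] with i hi hcartan using
      (cos_sq_right_of_kmat_mul_amat_mul_kmat_eq_nmat hi hcartan).symm

/-- **Asymptotics of the angular components of the Cartan decomposition along a
horocycle.**  If for every `r > 0` one has `k_{θ(r)} a_r k_{θ'(r)} = n_{2 sinh(r/2)}`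
in `SL(2,ℝ)`, then `cos²(θ(r)) → 1` and `cos²(θ'(r)) → 0` as `r → ∞`; that is, the
first angular component tends to the identity rotation while the second tends to a
quarter-turn (a `180°` rotation of the hyperbolic plane). -/
theorem cartan_angles_tendsto (θ θ' : ℝ → ℝ)
    (h : ∀ r : ℝ, 0 < r →
      kmat (θ r) * amat r * kmat (θ' r) = nmat (2 * Real.sinh (r / 2))) :
    Tendsto (fun r => Real.cos (θ r) ^ 2) atTop (𝓝 1) ∧
      Tendsto (fun r => Real.cos (θ' r) ^ 2) atTop (𝓝 0) :=
  cartan_angles_tendsto_general tendsto_id ((eventually_gt_atTop 0).mono h)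
end
end

section
/- Let (h_t)_{t∈ℝ} be a jointly measurable measure-preserving ergodic flow on a standard probability space (X,μ). Let ψ : [0,∞) → [0,∞) be a continuous function for which there exist constants C > 0, κ > κ' > 0 and C₁ ≥ 0 with |ψ(t) − C t^κ| ≤ C₁ (1 + t^{κ'}) for all t ≥ 0. Then for every f ∈ L^1(X,μ), the weighted averages A_T f(x) = (∫_0^T ψ(t) dt)^{−1} ∫_0^T f(h_{−t} x) ψ(t) dt converge to ∫_X f dμ for μ-almost every x ∈ X as T → ∞ (polynomially weighted Birkhoff pointwise ergodic theorem). -/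
open MeasureTheory Filter Topology

noncomputable section

/-!
Birkhoff's theorem for flows rests on running maxima `M S x = max_{0 ≤ t ≤ S} ∫₀ᵗ f (φ r x) dr`. If
`M S` were unbounded along almost every orbit, then `M (1 + S) x - M S (φ 1 x)`, whose integral is
nonnegative, would converge to `∫₀¹ f (φ r x) dr`, forcing `∫ f ≥ 0`. By ergodicity, `∫ f < 0`
therefore bounds the orbit integrals of `f` from above almost everywhere; apply this to `±f - d`.

Ordinary averages control averages with a monotone weight `w`: by the second mean value inequality
`∫_N^T w g` is at most `w T` times the largest tail `∫_c^T g`, hence `o(T w(T))` when `g` has mean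
zero, and doubling gives `T w(T) = O(∫₀ᵀ w)`. Replacing `w` by an equivalent weight costs only
`o(∫₀ᵀ w)`.
-/

section

open Set Asymptotics

section WeightedAverages

variable {E F : Type*} [NormedAddCommGroup E] [NormedAddCommGroup F]

lemma intervalIntegrable_of_locallyIntegrableOn_Ici {f : ℝ → E} {a b c : ℝ}
    (hf : LocallyIntegrableOn f (Ici a)) (hb : a ≤ b) (hc : a ≤ c) :
    IntervalIntegrable f volume b c :=
  (hf.integrableOn_compact_subset (fun _ ht => (le_min hb hc).trans ht.1)
    isCompact_uIcc).intervalIntegrable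

lemma intervalIntegrable_of_locallyIntegrable {f : ℝ → E} (hf : LocallyIntegrable f) (a b : ℝ) :
    IntervalIntegrable f volume a b :=
  (hf.integrableOn_isCompact isCompact_uIcc).intervalIntegrable

lemma exists_inter_Ioc_ae_eq_Ioc_of_isUpperSet {U : Set ℝ} (hU : IsUpperSet U) {a b : ℝ}
    (hab : a ≤ b) : ∃ c ∈ Icc a b, (U ∩ Ioc a b : Set ℝ) =ᵐ[volume] Ioc c b := by
  set V := insert b (U ∩ Ioc a b)
  have hV : ∀ t ∈ V, a ≤ t ∧ t ≤ b := by grind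
  have hVa : BddBelow V := ⟨a, fun t ht => (hV t ht).1⟩
  have hbV : b ∈ V := mem_insert _ _
  have hac : a ≤ sInf V := le_csInf ⟨b, hbV⟩ fun t ht => (hV t ht).1
  have hsub : U ∩ Ioc a b ⊆ Icc (sInf V) b := fun t ht =>
    ⟨csInf_le hVa (mem_insert_of_mem _ ht), ht.2.2⟩
  have hsup : Ioo (sInf V) b ⊆ U ∩ Ioc a b := by
    intro t ht
    obtain ⟨u, hu, hut⟩ := exists_lt_of_csInf_lt ⟨b, hbV⟩ ht.1
    have huU : u ∈ U := by grind
    exact ⟨hU hut.le huU, hac.trans_lt ht.1, ht.2.le⟩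
  refine ⟨sInf V, ⟨hac, csInf_le hVa hbV⟩, ?_⟩
  exact (hsub.eventuallyLE.trans Ioc_ae_eq_Icc.symm.le).antisymm
    (Ioo_ae_eq_Ioc.symm.le.trans hsup.eventuallyLE)

lemma integral_norm_sub_const_isBigO {g : ℝ → E} (hg : LocallyIntegrableOn g (Ici 0))
    (hgO : (fun T => ∫ t in (0)..T, ‖g t‖) =O[atTop] fun T => T) (m : E) :
    (fun T => ∫ t in (0)..T, ‖g t - m‖) =O[atTop] fun T => T := by
  refine IsBigO.trans ?_ (hgO.add (isBigO_const_mul_self ‖m‖ (fun T : ℝ => T) atTop))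
  refine IsBigO.of_bound 1 ?_
  filter_upwards [eventually_ge_atTop 0] with T hT
  have hgi := intervalIntegrable_of_locallyIntegrableOn_Ici hg le_rfl hT
  have hle : ∫ t in (0)..T, ‖g t - m‖ ≤ (∫ t in (0)..T, ‖g t‖) + ‖m‖ * T := by
    calc ∫ t in (0)..T, ‖g t - m‖ ≤ ∫ t in (0)..T, (‖g t‖ + ‖m‖) :=
          intervalIntegral.integral_mono_on hT (hgi.sub intervalIntegrable_const).norm
            (hgi.norm.add intervalIntegrable_const) fun t _ => norm_sub_le _ _
      _ = (∫ t in (0)..T, ‖g t‖) + ‖m‖ * T := by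
          rw [intervalIntegral.integral_add hgi.norm intervalIntegrable_const,
            intervalIntegral.integral_const, sub_zero, smul_eq_mul, mul_comm T]
  rw [one_mul]
  exact abs_le_abs_of_nonneg (intervalIntegral.integral_nonneg hT fun t _ => norm_nonneg _) hle

variable [NormedSpace ℝ E]

lemma isLittleO_integral_of_tail {u : ℝ → E} {W : ℝ → ℝ} (hu : LocallyIntegrableOn u (Ici 0))
    (hW : Tendsto W atTop atTop)
    (htail : ∀ ε > 0, ∃ N ≥ 0, ∀ᶠ T in atTop, ‖∫ t in N..T, u t‖ ≤ ε * W T) :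
    (fun T => ∫ t in (0)..T, u t) =o[atTop] W := by
  refine IsLittleO.of_bound fun ε hε => ?_
  obtain ⟨N, hN, hNT⟩ := htail (ε / 2) (half_pos hε)
  filter_upwards [hNT, (hW.const_mul_atTop (half_pos hε)).eventually_ge_atTop ‖∫ t in (0)..N, u t‖,
    eventually_ge_atTop 0] with T hNT hWT hT
  calc ‖∫ t in (0)..T, u t‖
      = ‖(∫ t in (0)..N, u t) + ∫ t in N..T, u t‖ := by
        rw [intervalIntegral.integral_add_adjacent_intervals
          (intervalIntegrable_of_locallyIntegrableOn_Ici hu le_rfl hN)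
          (intervalIntegrable_of_locallyIntegrableOn_Ici hu hN hT)]
    _ ≤ ε / 2 * W T + ε / 2 * W T := norm_add_le_of_le hWT hNT
    _ = ε * W T := by ring
    _ ≤ ε * ‖W T‖ := by gcongr; exact le_abs_self _

lemma isLittleO_integral_of_isLittleO {u : ℝ → E} {v : ℝ → F} {W : ℝ → ℝ}
    (hu : LocallyIntegrableOn u (Ici 0)) (hv : LocallyIntegrableOn v (Ici 0))
    (huv : u =o[atTop] v) (hvW : (fun T => ∫ t in (0)..T, ‖v t‖) =O[atTop] W)
    (hW : Tendsto W atTop atTop) :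
    (fun T => ∫ t in (0)..T, u t) =o[atTop] W := by
  obtain ⟨K, hK, hvK⟩ := hvW.exists_pos
  refine isLittleO_integral_of_tail hu hW fun ε hε => ?_
  obtain ⟨N, huN, hN⟩ := ((eventually_forall_ge_atTop.2 (huv.def (div_pos hε hK))).and
    (eventually_ge_atTop 0)).exists
  refine ⟨N, hN, ?_⟩
  filter_upwards [hvK.bound, eventually_ge_atTop N, hW.eventually_ge_atTop 0] with T hKT hNT hWT
  have hvi {b c : ℝ} (hb : 0 ≤ b) (hc : 0 ≤ c) :=
    intervalIntegrable_of_locallyIntegrableOn_Ici hv.norm hb hc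
  calc ‖∫ t in N..T, u t‖
      ≤ ∫ t in N..T, ε / K * ‖v t‖ :=
        intervalIntegral.norm_integral_le_of_norm_le hNT
          (ae_of_all _ fun t ht => huN t ht.1.le) ((hvi hN (hN.trans hNT)).const_mul _)
    _ = ε / K * ∫ t in N..T, ‖v t‖ := intervalIntegral.integral_const_mul _ _
    _ ≤ ε / K * ∫ t in (0)..T, ‖v t‖ := by
        gcongr
        exact intervalIntegral.integral_mono_interval hN hNT le_rfl
          (ae_of_all _ fun t => norm_nonneg _) (hvi le_rfl (hN.trans hNT))
    _ ≤ ε / K * (K * W T) := by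
        gcongr
        exact (le_abs_self _).trans (hKT.trans_eq (by rw [Real.norm_of_nonneg hWT]))
    _ = ε * W T := by field_simp

lemma locallyIntegrableOn_smul_of_monotoneOn {w : ℝ → ℝ} {g : ℝ → E} {a : ℝ}
    (hw : MonotoneOn w (Ici a)) (hg : LocallyIntegrableOn g (Ici a)) :
    LocallyIntegrableOn (fun t => w t • g t) (Ici a) := by
  rw [locallyIntegrableOn_iff isClosed_Ici.isLocallyClosed] at hg ⊢
  intro k hka hk
  obtain ⟨b, hb⟩ := hk.bddAbove
  obtain ⟨C, hC⟩ : ∃ C, ∀ t ∈ k, ‖w t‖ ≤ C := by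
    refine ⟨max (w (max a b)) (-w a), fun t ht =>
      abs_le'.2 ⟨le_max_of_le_left ?_, le_max_of_le_right ?_⟩⟩
    · exact hw (hka ht) (le_max_left a b) ((hb ht).trans (le_max_right a b))
    · exact neg_le_neg (hw self_mem_Ici (hka ht) (hka ht))
  exact (hg k hka hk).bdd_smul C
    (aemeasurable_restrict_of_monotoneOn hk.measurableSet (hw.mono hka)).aestronglyMeasurable
    (ae_restrict_of_forall_mem hk.measurableSet hC)

lemma tendsto_inv_smul_iff_isLittleO {α : Type*} {l : Filter α} {P : α → ℝ} {G : α → E} {m : E}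
    (hP : ∀ᶠ T in l, P T ≠ 0) :
    Tendsto (fun T => (P T)⁻¹ • G T) l (𝓝 m) ↔ (fun T => G T - P T • m) =o[l] P := by
  rw [← isLittleO_norm_norm, tendsto_iff_norm_sub_tendsto_zero,
    isLittleO_iff_tendsto' (hP.mono fun T hT h => absurd h (norm_ne_zero_iff.2 hT))]
  refine tendsto_congr' (hP.mono fun T hT => ?_)
  calc ‖(P T)⁻¹ • G T - m‖ = ‖(P T)⁻¹ • (G T - P T • m)‖ := by rw [smul_sub, inv_smul_smul₀ hT]
    _ = ‖G T - P T • m‖ / ‖P T‖ := by rw [norm_smul, norm_inv, inv_mul_eq_div]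

/-- A nonnegative nondecreasing weight on `[0, ∞)`, not identically zero, with `w (2t) = O(w t)` as
`t → ∞`; the model case is `t ↦ C * t ^ κ`. -/
structure IsDoublingWeight (w : ℝ → ℝ) : Prop where
  monotoneOn : MonotoneOn w (Ici 0)
  zero_nonneg : 0 ≤ w 0
  eventually_pos : ∀ᶠ t in atTop, 0 < w t
  isBigO_two_mul : (fun t => w (2 * t)) =O[atTop] w

lemma isDoublingWeight_const_mul_rpow {C κ : ℝ} (hC : 0 < C) (hκ : 0 ≤ κ) :
    IsDoublingWeight fun t => C * t ^ κ where
  monotoneOn s hs t _ hst := by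
    have := mem_Ici.1 hs
    dsimp only
    gcongr
  zero_nonneg := mul_nonneg hC.le (Real.rpow_nonneg le_rfl κ)
  eventually_pos := by
    filter_upwards [eventually_gt_atTop 0] with t ht
    positivity
  isBigO_two_mul := by
    refine IsBigO.of_bound (2 ^ κ) ?_
    filter_upwards [eventually_ge_atTop 0] with t ht
    rw [Real.mul_rpow zero_le_two ht, mul_left_comm, norm_mul, Real.norm_of_nonneg (by positivity)]

lemma isLittleO_rpow_rpow_atTop {p q : ℝ} (hpq : p < q) :
    (fun t : ℝ => t ^ p) =o[atTop] fun t : ℝ => t ^ q := by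
  rw [isLittleO_iff_tendsto' ((eventually_gt_atTop 0).mono fun t ht h =>
    absurd h (Real.rpow_pos_of_pos ht q).ne')]
  refine (tendsto_rpow_neg_atTop (sub_pos.2 hpq)).congr' ?_
  filter_upwards [eventually_gt_atTop 0] with t ht
  rw [neg_sub, Real.rpow_sub ht]

lemma isEquivalent_const_mul_rpow_of_abs_sub_le {ψ : ℝ → ℝ} {C κ κ' C₁ : ℝ} (hC : C ≠ 0)
    (hκ : 0 < κ) (hκ' : κ' < κ) (hbound : ∀ t, 0 ≤ t → |ψ t - C * t ^ κ| ≤ C₁ * (1 + t ^ κ')) :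
    ψ ~[atTop] fun t => C * t ^ κ := by
  have hone : (fun _ => (1 : ℝ)) =o[atTop] fun t : ℝ => t ^ κ :=
    (isLittleO_one_left_iff ℝ).2 <|
      tendsto_norm_atTop_atTop.comp (tendsto_rpow_atTop hκ)
  have hrem : (fun t => C₁ * (1 + t ^ κ')) =o[atTop] fun t => C * t ^ κ :=
    ((hone.add (isLittleO_rpow_rpow_atTop hκ')).const_mul_left C₁).const_mul_right hC
  refine IsBigO.trans_isLittleO (IsBigO.of_bound 1 ?_) hrem
  filter_upwards [eventually_ge_atTop 0] with t ht
  rw [one_mul]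
  exact (hbound t ht).trans (le_abs_self _)

namespace IsDoublingWeight

variable {w : ℝ → ℝ} {g : ℝ → E}

lemma nonneg (hw : IsDoublingWeight w) {t : ℝ} (ht : 0 ≤ t) : 0 ≤ w t :=
  hw.zero_nonneg.trans (hw.monotoneOn self_mem_Ici ht ht)

lemma locallyIntegrableOn (hw : IsDoublingWeight w) : LocallyIntegrableOn w (Ici 0) := by
  simpa using locallyIntegrableOn_smul_of_monotoneOn hw.monotoneOn
    ((locallyIntegrable_const (1 : ℝ)).locallyIntegrableOn _)

lemma half_mul_le_integral (hw : IsDoublingWeight w) {T : ℝ} (hT : 0 ≤ T) :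
    T / 2 * w (T / 2) ≤ ∫ t in (0)..T, w t := by
  have hT2 : 0 ≤ T / 2 := by positivity
  have hint {b c : ℝ} (hb : 0 ≤ b) (hc : 0 ≤ c) :=
    intervalIntegrable_of_locallyIntegrableOn_Ici hw.locallyIntegrableOn hb hc
  calc T / 2 * w (T / 2) = ∫ t in (T / 2)..T, w (T / 2) := by
        rw [intervalIntegral.integral_const, sub_half, smul_eq_mul]
    _ ≤ ∫ t in (T / 2)..T, w t :=
        intervalIntegral.integral_mono_on (half_le_self hT) intervalIntegrable_const
          (hint hT2 hT) fun t ht => hw.monotoneOn hT2 (hT2.trans ht.1) ht.1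
    _ ≤ ∫ t in (0)..T, w t :=
        intervalIntegral.integral_mono_interval hT2 (half_le_self hT) le_rfl
          ((ae_restrict_mem measurableSet_Ioc).mono fun t ht => hw.nonneg ht.1.le) (hint le_rfl hT)

lemma tendsto_integral_atTop (hw : IsDoublingWeight w) :
    Tendsto (fun T => ∫ t in (0)..T, w t) atTop atTop := by
  obtain ⟨a, hwa, ha⟩ := (hw.eventually_pos.and (eventually_ge_atTop 0)).exists
  have hlim : Tendsto (fun T : ℝ => T / 2 * w a) atTop atTop :=
    (tendsto_id.atTop_div_const two_pos).atTop_mul_const hwa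
  refine tendsto_atTop_mono' atTop ?_ hlim
  filter_upwards [eventually_ge_atTop (2 * a)] with T hT
  have haT : a ≤ T / 2 := by linarith
  refine le_trans ?_ (hw.half_mul_le_integral (by linarith))
  exact mul_le_mul_of_nonneg_left (hw.monotoneOn ha (ha.trans haT) haT) (ha.trans haT)

lemma mul_self_isBigO_integral (hw : IsDoublingWeight w) :
    (fun T => T * w T) =O[atTop] fun T => ∫ t in (0)..T, w t := by
  have hhalf : (fun T => T / 2 * w (T / 2)) =O[atTop] fun T => ∫ t in (0)..T, w t := by
    refine IsBigO.of_bound 1 ?_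
    filter_upwards [eventually_ge_atTop 0] with T hT
    have hT2 : 0 ≤ T / 2 := by positivity
    rw [one_mul, Real.norm_of_nonneg (mul_nonneg hT2 (hw.nonneg hT2))]
    exact (hw.half_mul_le_integral hT).trans (le_abs_self _)
  have hdouble : w =O[atTop] fun T => w (T / 2) := by
    have := hw.isBigO_two_mul.comp_tendsto (tendsto_id.atTop_div_const two_pos)
    simpa [Function.comp_def, mul_div_cancel₀] using this
  have hid : (fun T : ℝ => T) =O[atTop] fun T => T / 2 := by
    simpa only [div_eq_inv_mul] using
      isBigO_self_const_mul (inv_ne_zero two_ne_zero) (fun T : ℝ => T) atTop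
  exact (hid.mul hdouble).trans hhalf

lemma integral_norm_smul_isBigO (hw : IsDoublingWeight w) (hg : LocallyIntegrableOn g (Ici 0))
    (hgO : (fun T => ∫ t in (0)..T, ‖g t‖) =O[atTop] fun T => T) :
    (fun T => ∫ t in (0)..T, ‖w t • g t‖) =O[atTop] fun T => ∫ t in (0)..T, w t := by
  refine IsBigO.trans ?_ (((hgO.mul (isBigO_refl w atTop))).trans hw.mul_self_isBigO_integral)
  refine IsBigO.of_bound 1 ?_
  filter_upwards [eventually_ge_atTop 0] with T hT
  rw [one_mul]
  have hwg : ∀ t ∈ Icc 0 T, ‖w t • g t‖ ≤ ‖g t‖ * w T := by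
    intro t ht
    rw [norm_smul, Real.norm_of_nonneg (hw.nonneg ht.1), mul_comm]
    gcongr
    exact hw.monotoneOn ht.1 hT ht.2
  rw [← intervalIntegral.integral_mul_const]
  refine abs_le_abs_of_nonneg (intervalIntegral.integral_nonneg hT fun t _ => norm_nonneg _)
    (intervalIntegral.integral_mono_on hT ?_ ?_ hwg)
  · exact intervalIntegrable_of_locallyIntegrableOn_Ici
      (locallyIntegrableOn_smul_of_monotoneOn hw.monotoneOn hg).norm le_rfl hT
  · exact (intervalIntegrable_of_locallyIntegrableOn_Ici hg.norm le_rfl hT).mul_const _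

end IsDoublingWeight

lemma exists_norm_integral_tail_le {g : ℝ → E} (hg : LocallyIntegrableOn g (Ici 0))
    (hg0 : (fun T => ∫ t in (0)..T, g t) =o[atTop] fun T => T) {ε : ℝ} (hε : 0 < ε) :
    ∃ N ≥ 0, ∀ T ≥ N, ∀ c ∈ Icc N T, ‖∫ t in c..T, g t‖ ≤ ε * T := by
  obtain ⟨N, hgN, hN⟩ := ((eventually_forall_ge_atTop.2 (hg0.def (half_pos hε))).and
    (eventually_ge_atTop 0)).exists
  refine ⟨N, hN, fun T hNT c hc => ?_⟩
  have hc0 : 0 ≤ c := hN.trans hc.1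
  have hT0 : 0 ≤ T := hN.trans hNT
  calc ‖∫ t in c..T, g t‖ = ‖(∫ t in (0)..T, g t) - ∫ t in (0)..c, g t‖ := by
        rw [intervalIntegral.integral_interval_sub_left
          (intervalIntegrable_of_locallyIntegrableOn_Ici hg le_rfl hT0)
          (intervalIntegrable_of_locallyIntegrableOn_Ici hg le_rfl hc0)]
    _ ≤ ε / 2 * ‖T‖ + ε / 2 * ‖c‖ := norm_sub_le_of_le (hgN T hNT) (hgN c hc.1)
    _ ≤ ε / 2 * T + ε / 2 * T := by
        rw [Real.norm_of_nonneg hT0, Real.norm_of_nonneg hc0]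
        gcongr
        exact hc.2
    _ = ε * T := by ring

variable [CompleteSpace E]

lemma smul_eq_setIntegral_indicator {r M : ℝ} (hr : 0 ≤ r) (hrM : r ≤ M) (v : E) :
    r • v = ∫ s in Ioc 0 M, (Iio r).indicator (fun _ => v) s := by
  have hinter : Ioc 0 M ∩ Iio r = Ioo 0 r := by grind
  rw [setIntegral_indicator measurableSet_Iio, hinter, setIntegral_const, Real.volume_real_Ioo,
    sub_zero, max_eq_left hr]

lemma norm_integral_smul_le_of_monotoneOn {w : ℝ → ℝ} {g : ℝ → E} {a b B : ℝ} (hab : a ≤ b)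
    (hw : MonotoneOn w (Icc a b)) (hwa : 0 ≤ w a) (hg : IntervalIntegrable g volume a b)
    (hB : ∀ c ∈ Icc a b, ‖∫ t in c..b, g t‖ ≤ B) :
    ‖∫ t in a..b, w t • g t‖ ≤ w b * B := by
  obtain ⟨W, hW, hWw⟩ := hw.exists_monotone_extension
    (hw.map_bddBelow subset_rfl ⟨a, fun t ht => ht.1, left_mem_Icc.2 hab⟩)
    (hw.map_bddAbove subset_rfl ⟨b, fun t ht => ht.2, right_mem_Icc.2 hab⟩)
  have hwb : 0 ≤ w b := hwa.trans (hw (left_mem_Icc.2 hab) (right_mem_Icc.2 hab) hab)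
  have hcake : ∀ t ∈ Ioc a b,
      w t • g t = ∫ s in Ioc 0 (w b), (Iio (W t)).indicator (fun _ => g t) s := by
    intro t ht
    have htI := Ioc_subset_Icc_self ht
    rw [← hWw htI]
    refine smul_eq_setIntegral_indicator ?_ ?_ (g t)
    · exact hwa.trans (hw (left_mem_Icc.2 hab) htI htI.1)
    · exact hw htI (right_mem_Icc.2 hab) htI.2
  have hint : Integrable (fun p : ℝ × ℝ => (Iio (W p.1)).indicator (fun _ => g p.1) p.2)
      ((volume.restrict (Ioc a b)).prod (volume.restrict (Ioc 0 (w b)))) :=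
    (hg.1.comp_fst _).indicator <|
      measurableSet_lt measurable_snd (hW.measurable.comp measurable_fst)
  have hslice : ∀ s, ‖∫ t in Ioc a b, (Iio (W t)).indicator (fun _ => g t) s‖ ≤ B := by
    intro s
    have hU : IsUpperSet {t | s < W t} := fun t u htu ht => lt_of_lt_of_le ht (hW htu)
    obtain ⟨c, hc, hcU⟩ := exists_inter_Ioc_ae_eq_Ioc_of_isUpperSet hU hab
    have heq : ∫ t in Ioc a b, (Iio (W t)).indicator (fun _ => g t) s = ∫ t in c..b, g t := by
      rw [intervalIntegral.integral_of_le hc.2, ← setIntegral_congr_set hcU, inter_comm,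
        ← setIntegral_indicator (measurableSet_lt measurable_const hW.measurable)]
      rfl
    exact heq ▸ hB c hc
  calc ‖∫ t in a..b, w t • g t‖
      = ‖∫ s in Ioc 0 (w b), ∫ t in Ioc a b, (Iio (W t)).indicator (fun _ => g t) s‖ := by
        rw [intervalIntegral.integral_of_le hab, setIntegral_congr_fun measurableSet_Ioc hcake,
          integral_integral_swap hint]
    _ ≤ B * volume.real (Ioc 0 (w b)) :=
        norm_setIntegral_le_of_norm_le_const measure_Ioc_lt_top fun s _ => hslice s
    _ = w b * B := by rw [Real.volume_real_Ioc, sub_zero, max_eq_left hwb, mul_comm]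

namespace IsDoublingWeight

variable {w ψ : ℝ → ℝ} {g : ℝ → E}

lemma isLittleO_integral_smul (hw : IsDoublingWeight w) (hg : LocallyIntegrableOn g (Ici 0))
    (hg0 : (fun T => ∫ t in (0)..T, g t) =o[atTop] fun T => T) :
    (fun T => ∫ t in (0)..T, w t • g t) =o[atTop] fun T => ∫ t in (0)..T, w t := by
  obtain ⟨K, hK, hwK⟩ := hw.mul_self_isBigO_integral.exists_pos
  refine isLittleO_integral_of_tail (locallyIntegrableOn_smul_of_monotoneOn hw.monotoneOn hg)
    hw.tendsto_integral_atTop fun ε hε => ?_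
  obtain ⟨N, hN, htail⟩ := exists_norm_integral_tail_le hg hg0 (div_pos hε hK)
  refine ⟨N, hN, ?_⟩
  filter_upwards [hwK.bound, eventually_ge_atTop N,
    hw.tendsto_integral_atTop.eventually_ge_atTop 0] with T hKT hNT hWT
  have hT := hN.trans hNT
  rw [Real.norm_of_nonneg hWT, Real.norm_of_nonneg (mul_nonneg hT (hw.nonneg hT))] at hKT
  calc ‖∫ t in N..T, w t • g t‖ ≤ w T * (ε / K * T) :=
        norm_integral_smul_le_of_monotoneOn hNT
          (hw.monotoneOn.mono (Icc_subset_Ici_self.trans (Ici_subset_Ici.2 hN))) (hw.nonneg hN)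
          (intervalIntegrable_of_locallyIntegrableOn_Ici hg hN hT) (htail T hNT)
    _ = ε / K * (T * w T) := by ring
    _ ≤ ε / K * (K * ∫ t in (0)..T, w t) := by gcongr
    _ = ε * ∫ t in (0)..T, w t := by field_simp

lemma isLittleO_integral_smul_of_isEquivalent (hw : IsDoublingWeight w)
    (hψ : ContinuousOn ψ (Ici 0)) (hψw : ψ ~[atTop] w) (hg : LocallyIntegrableOn g (Ici 0))
    (hg0 : (fun T => ∫ t in (0)..T, g t) =o[atTop] fun T => T)
    (hgO : (fun T => ∫ t in (0)..T, ‖g t‖) =O[atTop] fun T => T) :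
    (fun T => ∫ t in (0)..T, ψ t • g t) =o[atTop] fun T => ∫ t in (0)..T, w t := by
  have hwg := locallyIntegrableOn_smul_of_monotoneOn hw.monotoneOn hg
  have hψg : LocallyIntegrableOn (fun t => ψ t • g t) (Ici 0) :=
    hg.continuousOn_smul isClosed_Ici.isLocallyClosed hψ
  have hdiff : (fun T => ∫ t in (0)..T, (ψ t • g t - w t • g t)) =o[atTop]
      fun T => ∫ t in (0)..T, w t := by
    refine isLittleO_integral_of_isLittleO (hψg.sub hwg) hwg ?_
      (hw.integral_norm_smul_isBigO hg hgO) hw.tendsto_integral_atTop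
    simpa only [← sub_smul, Pi.sub_apply] using hψw.isLittleO.smul_isBigO (isBigO_refl g atTop)
  refine (hdiff.add (hw.isLittleO_integral_smul hg hg0)).congr' ?_ EventuallyEq.rfl
  filter_upwards [eventually_ge_atTop 0] with T hT
  rw [intervalIntegral.integral_sub (intervalIntegrable_of_locallyIntegrableOn_Ici hψg le_rfl hT)
    (intervalIntegrable_of_locallyIntegrableOn_Ici hwg le_rfl hT), sub_add_cancel]

lemma isEquivalent_integral (hw : IsDoublingWeight w)
    (hψ : ContinuousOn ψ (Ici 0)) (hψw : ψ ~[atTop] w) :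
    (fun T => ∫ t in (0)..T, ψ t) ~[atTop] fun T => ∫ t in (0)..T, w t := by
  have hψi := hψ.locallyIntegrableOn (μ := volume) measurableSet_Ici
  have hwO : (fun T => ∫ t in (0)..T, ‖w t‖) =O[atTop] fun T => ∫ t in (0)..T, w t := by
    refine (isBigO_refl _ _).congr' ?_ EventuallyEq.rfl
    filter_upwards [eventually_ge_atTop 0] with T hT
    refine intervalIntegral.integral_congr fun t ht => ?_
    rw [uIcc_of_le hT] at ht
    exact (Real.norm_of_nonneg (hw.nonneg ht.1)).symm
  refine (isLittleO_integral_of_isLittleO (hψi.sub hw.locallyIntegrableOn) hw.locallyIntegrableOn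
    hψw.isLittleO hwO hw.tendsto_integral_atTop).congr' ?_ EventuallyEq.rfl
  filter_upwards [eventually_ge_atTop 0] with T hT
  exact intervalIntegral.integral_sub (intervalIntegrable_of_locallyIntegrableOn_Ici hψi le_rfl hT)
    (intervalIntegrable_of_locallyIntegrableOn_Ici hw.locallyIntegrableOn le_rfl hT)

lemma tendsto_weighted_average (hw : IsDoublingWeight w) (hψ : ContinuousOn ψ (Ici 0))
    (hψw : ψ ~[atTop] w) (hg : LocallyIntegrableOn g (Ici 0)) {m : E}
    (hgm : Tendsto (fun T => T⁻¹ • ∫ t in (0)..T, g t) atTop (𝓝 m))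
    (hgO : (fun T => ∫ t in (0)..T, ‖g t‖) =O[atTop] fun T => T) :
    Tendsto (fun T => (∫ t in (0)..T, ψ t)⁻¹ • ∫ t in (0)..T, ψ t • g t) atTop (𝓝 m) := by
  have hψw_int := hw.isEquivalent_integral hψ hψw
  have hψ_top := hψw_int.symm.tendsto_atTop hw.tendsto_integral_atTop
  rw [tendsto_inv_smul_iff_isLittleO (hψ_top.eventually_ne_atTop 0)]
  have hgi {T : ℝ} (hT : 0 ≤ T) := intervalIntegrable_of_locallyIntegrableOn_Ici hg le_rfl hT
  have hgm_integral : (fun T => ∫ t in (0)..T, (g t - m)) =o[atTop] fun T => T := by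
    refine ((tendsto_inv_smul_iff_isLittleO (eventually_ne_atTop 0)).1 hgm).congr' ?_
      EventuallyEq.rfl
    filter_upwards [eventually_ge_atTop 0] with T hT
    rw [intervalIntegral.integral_sub (hgi hT) intervalIntegrable_const,
      intervalIntegral.integral_const, sub_zero]
  have hcentered : (fun T => ∫ t in (0)..T, ψ t • (g t - m)) =o[atTop]
      fun T => ∫ t in (0)..T, ψ t :=
    (hw.isLittleO_integral_smul_of_isEquivalent hψ hψw
      (hg.sub ((locallyIntegrable_const m).locallyIntegrableOn _)) hgm_integral
      (integral_norm_sub_const_isBigO hg hgO m)).trans_isBigO hψw_int.symm.isBigO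
  refine hcentered.congr' ?_ EventuallyEq.rfl
  filter_upwards [eventually_ge_atTop 0] with T hT
  have hψT : ContinuousOn ψ (uIcc 0 T) := hψ.mono (uIcc_of_le hT ▸ Icc_subset_Ici_self)
  rw [← intervalIntegral.integral_smul_const, ← intervalIntegral.integral_sub
    ((hgi hT).continuousOn_smul hψT) (intervalIntegrable_const.continuousOn_smul hψT)]
  simp only [smul_sub]

end IsDoublingWeight

end WeightedAverages

section Orbits

lemma integral_comp_of_measurePreserving {Y Z E : Type*} [MeasurableSpace Y] [MeasurableSpace Z]
    {ν : Measure Y} {ρ : Measure Z} [NormedAddCommGroup E] [NormedSpace ℝ E] {p : Y → Z}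
    {g : Z → E} (hp : MeasurePreserving p ν ρ) (hg : AEStronglyMeasurable g ρ) :
    ∫ y, g (p y) ∂ν = ∫ z, g z ∂ρ := by
  rw [← integral_map hp.aemeasurable (by rwa [hp.map_eq]), hp.map_eq]

lemma locallyIntegrable_iff_forall_closedBall {Y E : Type*} [PseudoMetricSpace Y] [ProperSpace Y]
    [MeasurableSpace Y] {ν : Measure Y} [NormedAddCommGroup E] {g : Y → E} (y : Y) :
    LocallyIntegrable g ν ↔ ∀ n : ℕ, IntegrableOn g (Metric.closedBall y n) ν := by
  refine ⟨fun hg n => hg.integrableOn_isCompact (isCompact_closedBall y n), fun hg => ?_⟩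
  refine locallyIntegrable_iff.2 fun k hk => ?_
  obtain ⟨r, hr⟩ := hk.isBounded.subset_closedBall y
  obtain ⟨n, hn⟩ := exists_nat_ge r
  exact (hg n).mono_set (hr.trans (Metric.closedBall_subset_closedBall hn))

variable {X : Type*} {φ : ℝ → X → X} {x : X}

/-- The integral `∫₀ᵀ f (φ t x) dt` of an observable along an orbit, as a function of `x`. -/
def orbitIntegral {E : Type*} [NormedAddCommGroup E] [NormedSpace ℝ E] (φ : ℝ → X → X) (f : X → E)
    (T : ℝ) (x : X) : E :=
  ∫ t in (0)..T, f (φ t x)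

/-- The largest value attained up to time `S` by the orbit integrals of `f`; junk for `S < 0`. -/
def maxOrbitIntegral (φ : ℝ → X → X) (f : X → ℝ) (S : ℝ) (x : X) : ℝ :=
  sSup ((fun t => orbitIntegral φ f t x) '' Icc 0 S)

lemma continuous_orbitIntegral {E : Type*} [NormedAddCommGroup E] [NormedSpace ℝ E] {f : X → E}
    (hx : LocallyIntegrable fun t => f (φ t x)) : Continuous fun t => orbitIntegral φ f t x :=
  intervalIntegral.continuous_primitive (intervalIntegrable_of_locallyIntegrable hx) 0

lemma norm_orbitIntegral_le {E : Type*} [NormedAddCommGroup E] [NormedSpace ℝ E] {f : X → E}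
    (hx : LocallyIntegrable fun t => f (φ t x)) {t S : ℝ} (ht : t ∈ Icc 0 S) :
    ‖orbitIntegral φ f t x‖ ≤ orbitIntegral φ (fun y => ‖f y‖) S x :=
  (intervalIntegral.norm_integral_le_integral_norm ht.1).trans <|
    intervalIntegral.integral_mono_interval le_rfl ht.1 ht.2
      (Eventually.of_forall fun _ => norm_nonneg _)
      (intervalIntegrable_of_locallyIntegrable hx 0 S).norm

variable {f : X → ℝ} {S S' : ℝ}

lemma isLUB_maxOrbitIntegral (hx : LocallyIntegrable fun t => f (φ t x)) (hS : 0 ≤ S) :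
    IsLUB ((fun t => orbitIntegral φ f t x) '' Icc 0 S) (maxOrbitIntegral φ f S x) :=
  (isCompact_Icc.image (continuous_orbitIntegral hx)).isLUB_sSup ((nonempty_Icc.2 hS).image _)

lemma orbitIntegral_le_maxOrbitIntegral (hx : LocallyIntegrable fun t => f (φ t x)) {t : ℝ}
    (ht : t ∈ Icc 0 S) : orbitIntegral φ f t x ≤ maxOrbitIntegral φ f S x :=
  (isLUB_maxOrbitIntegral hx (ht.1.trans ht.2)).1 (mem_image_of_mem _ ht)

lemma maxOrbitIntegral_le_iff (hx : LocallyIntegrable fun t => f (φ t x)) (hS : 0 ≤ S) {b : ℝ} :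
    maxOrbitIntegral φ f S x ≤ b ↔ ∀ t ∈ Icc 0 S, orbitIntegral φ f t x ≤ b :=
  (isLUB_le_iff (isLUB_maxOrbitIntegral hx hS)).trans forall_mem_image

lemma maxOrbitIntegral_mono (hx : LocallyIntegrable fun t => f (φ t x)) (hS : 0 ≤ S)
    (hSS' : S ≤ S') : maxOrbitIntegral φ f S x ≤ maxOrbitIntegral φ f S' x :=
  (isLUB_maxOrbitIntegral hx hS).mono (isLUB_maxOrbitIntegral hx (hS.trans hSS'))
    (image_mono (Icc_subset_Icc_right hSS'))

lemma maxOrbitIntegral_nonneg (hx : LocallyIntegrable fun t => f (φ t x)) (hS : 0 ≤ S) :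
    0 ≤ maxOrbitIntegral φ f S x := by
  simpa [orbitIntegral] using orbitIntegral_le_maxOrbitIntegral hx (left_mem_Icc.2 hS)

lemma maxOrbitIntegral_le_orbitIntegral_norm (hx : LocallyIntegrable fun t => f (φ t x))
    (hS : 0 ≤ S) : maxOrbitIntegral φ f S x ≤ orbitIntegral φ (fun y => ‖f y‖) S x :=
  (maxOrbitIntegral_le_iff hx hS).2 fun _ ht =>
    (Real.le_norm_self _).trans (norm_orbitIntegral_le hx ht)

lemma bddAbove_range_maxOrbitIntegral_iff (hx : LocallyIntegrable fun t => f (φ t x)) :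
    BddAbove (range fun n : ℕ => maxOrbitIntegral φ f n x) ↔
      IsBoundedUnder (· ≤ ·) atTop fun t => orbitIntegral φ f t x := by
  constructor
  · rintro ⟨b, hb⟩
    refine isBoundedUnder_of_eventually_le (a := b) ?_
    filter_upwards [eventually_ge_atTop 0] with t ht
    exact (orbitIntegral_le_maxOrbitIntegral hx ⟨ht, Nat.le_ceil t⟩).trans (hb (mem_range_self _))
  · rintro ⟨b, hb⟩
    obtain ⟨s, hs⟩ := eventually_atTop.1 (eventually_map.1 hb)
    refine ⟨max (maxOrbitIntegral φ f s x) b, forall_mem_range.2 fun n => ?_⟩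
    refine (maxOrbitIntegral_le_iff hx n.cast_nonneg).2 fun t ht => ?_
    rcases le_total t s with hts | hst
    · exact (orbitIntegral_le_maxOrbitIntegral hx ⟨ht.1, hts⟩).trans (le_max_left _ _)
    · exact (hs t hst).trans (le_max_right _ _)

section Flow

variable [MeasurableSpace X]

/-- A jointly measurable action of `ℝ` on `X` by `μ`-preserving transformations. -/
structure IsMeasurePreservingFlow (μ : Measure X) (φ : ℝ → X → X) : Prop where
  zero : ∀ x, φ 0 x = x
  add : ∀ s t x, φ (s + t) x = φ s (φ t x)
  measurable : Measurable fun q : ℝ × X => φ q.1 q.2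
  measurePreserving : ∀ t, MeasurePreserving (φ t) μ μ

/-- A measure-preserving flow all of whose strictly invariant measurable sets have measure `0`
or `1`. -/
structure IsErgodicFlow (μ : Measure X) (φ : ℝ → X → X) : Prop
    extends IsMeasurePreservingFlow μ φ where
  ergodic : ∀ s, MeasurableSet s → (∀ t, φ t ⁻¹' s = s) → μ s = 0 ∨ μ s = 1

variable {μ : Measure X}

lemma IsErgodicFlow.reverse (hφ : IsErgodicFlow μ φ) : IsErgodicFlow μ fun t => φ (-t) where
  zero x := by rw [neg_zero, hφ.zero]
  add s t x := by rw [neg_add, hφ.add]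
  measurable := hφ.measurable.comp (measurable_fst.neg.prodMk measurable_snd)
  measurePreserving t := hφ.measurePreserving (-t)
  ergodic s hs hinv := hφ.ergodic s hs fun t => by simpa using hinv (-t)

namespace IsMeasurePreservingFlow

lemma apply_neg_apply (hφ : IsMeasurePreservingFlow μ φ) (s : ℝ) (x : X) :
    φ (-s) (φ s x) = x := by
  rw [← hφ.add, neg_add_cancel, hφ.zero]

lemma measurePreserving_skew [SFinite μ] (hφ : IsMeasurePreservingFlow μ φ) (ν : Measure ℝ)
    [SFinite ν] :
    MeasurePreserving (fun q : ℝ × X => (q.1, φ q.1 q.2)) (ν.prod μ) (ν.prod μ) :=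
  (MeasurePreserving.id ν).skew_product hφ.measurable
    (ae_of_all _ fun t => (hφ.measurePreserving t).map_eq)

lemma ae_ae_eq [SFinite μ] {Y : Type*} {f f' : X → Y} (hφ : IsMeasurePreservingFlow μ φ)
    (hff' : f =ᵐ[μ] f') : ∀ᵐ x ∂μ, ∀ᵐ t : ℝ, f (φ t x) = f' (φ t x) := by
  have hprod : ∀ᵐ q ∂(volume : Measure ℝ).prod μ, f (φ q.1 q.2) = f' (φ q.1 q.2) :=
    (hφ.measurePreserving_skew volume).quasiMeasurePreserving.ae
      (Measure.quasiMeasurePreserving_snd.ae hff')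
  exact Measure.ae_ae_of_ae_prod (Measure.measurePreserving_swap.quasiMeasurePreserving.ae hprod)

section Integrability

variable {E : Type*} [NormedAddCommGroup E] {f : X → E}

lemma integrable_comp [SFinite μ] (hφ : IsMeasurePreservingFlow μ φ) (hf : Integrable f μ)
    (ν : Measure ℝ) [IsFiniteMeasure ν] :
    Integrable (fun q : ℝ × X => f (φ q.1 q.2)) (ν.prod μ) :=
  (hφ.measurePreserving_skew ν).integrable_comp_of_integrable (hf.comp_snd ν)

lemma ae_locallyIntegrable [SFinite μ] (hφ : IsMeasurePreservingFlow μ φ)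
    (hf : Integrable f μ) : ∀ᵐ x ∂μ, LocallyIntegrable (fun t => f (φ t x)) := by
  simp only [locallyIntegrable_iff_forall_closedBall (0 : ℝ)]
  refine ae_all_iff.2 fun n => ?_
  have : IsFiniteMeasure (volume.restrict (Metric.closedBall (0 : ℝ) n)) :=
    isFiniteMeasure_restrict.2 measure_closedBall_lt_top.ne
  exact (hφ.integrable_comp hf _).prod_left_ae

lemma locallyIntegrable_apply_iff (hφ : IsMeasurePreservingFlow μ φ) (s : ℝ) :
    LocallyIntegrable (fun t => f (φ t (φ s x))) ↔ LocallyIntegrable fun t => f (φ t x) := by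
  have hmap := locallyIntegrable_map_homeomorph (μ := volume) (Homeomorph.addRight s)
    (f := fun t => f (φ t x))
  rw [Homeomorph.coe_addRight, map_add_right_eq_self] at hmap
  simp only [hmap, Function.comp_def, hφ.add]

lemma measurableSet_locallyIntegrable (hφ : IsMeasurePreservingFlow μ φ)
    (hf : StronglyMeasurable f) : MeasurableSet {x | LocallyIntegrable fun t => f (φ t x)} := by
  simp only [locallyIntegrable_iff_forall_closedBall (0 : ℝ), ofPred_forall]
  exact .iInter fun n => measurableSet_integrable
    (hf.comp_measurable (hφ.measurable.comp measurable_swap))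

lemma exists_stronglyMeasurable_locallyIntegrable [SFinite μ] (hφ : IsMeasurePreservingFlow μ φ)
    (hf : Integrable f μ) :
    ∃ f' : X → E, StronglyMeasurable f' ∧ f =ᵐ[μ] f' ∧
      ∀ x, LocallyIntegrable fun t => f' (φ t x) := by
  obtain ⟨g, hg, hfg⟩ := hf.aestronglyMeasurable
  set L := {x | LocallyIntegrable fun t => g (φ t x)}
  refine ⟨L.indicator g, hg.indicator (hφ.measurableSet_locallyIntegrable hg), ?_, fun x => ?_⟩
  · filter_upwards [hfg, hφ.ae_locallyIntegrable (hf.congr hfg)] with x hx hxL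
    rw [hx, indicator_of_mem (s := L) hxL]
  · have hmem : ∀ t, φ t x ∈ L ↔ x ∈ L := fun t => hφ.locallyIntegrable_apply_iff t
    by_cases hx : x ∈ L
    · simp only [indicator_of_mem ((hmem _).2 hx)]
      exact hx
    · simpa only [indicator_of_notMem (mt (hmem _).1 hx)] using locallyIntegrable_zero

end Integrability

section OrbitIntegral

variable {E : Type*} [NormedAddCommGroup E] [NormedSpace ℝ E] {f : X → E}

lemma orbitIntegral_add (hφ : IsMeasurePreservingFlow μ φ)
    (hx : LocallyIntegrable fun t => f (φ t x)) (s t : ℝ) :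
    orbitIntegral φ f (s + t) x = orbitIntegral φ f s x + orbitIntegral φ f t (φ s x) := by
  have hint := intervalIntegrable_of_locallyIntegrable hx
  simp only [orbitIntegral, ← hφ.add]
  rw [intervalIntegral.integral_comp_add_right fun t => f (φ t x), zero_add, add_comm t,
    intervalIntegral.integral_add_adjacent_intervals (hint _ _) (hint _ _)]

lemma stronglyMeasurable_orbitIntegral (hφ : IsMeasurePreservingFlow μ φ)
    (hf : StronglyMeasurable f) (T : ℝ) : StronglyMeasurable (orbitIntegral φ f T) := by
  have hm : StronglyMeasurable fun q : ℝ × X => f (φ q.1 q.2) := hf.comp_measurable hφ.measurable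
  exact hm.integral_prod_left'.sub hm.integral_prod_left'

lemma integrable_orbitIntegral [SFinite μ] (hφ : IsMeasurePreservingFlow μ φ)
    (hf : Integrable f μ) (T : ℝ) : Integrable (orbitIntegral φ f T) μ :=
  (hφ.integrable_comp hf _).integral_prod_right.sub (hφ.integrable_comp hf _).integral_prod_right

lemma integral_orbitIntegral [SFinite μ] [CompleteSpace E]
    (hφ : IsMeasurePreservingFlow μ φ) (hf : Integrable f μ) (T : ℝ) :
    ∫ x, orbitIntegral φ f T x ∂μ = T • ∫ x, f x ∂μ := by
  have hpres (t : ℝ) := integral_comp_of_measurePreserving (hφ.measurePreserving t) hf.1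
  have : IsFiniteMeasure ((volume : Measure ℝ).restrict (uIoc 0 T)) :=
    inferInstanceAs (IsFiniteMeasure (volume.restrict (Ioc _ _)))
  calc ∫ x, orbitIntegral φ f T x ∂μ = ∫ t in (0)..T, ∫ x, f (φ t x) ∂μ :=
        (intervalIntegral_integral_swap (hφ.integrable_comp hf _)).symm
    _ = T • ∫ x, f x ∂μ := by
        simp only [hpres, intervalIntegral.integral_const, sub_zero]

end OrbitIntegral

section MaxOrbitIntegral

variable {f : X → ℝ} {s S : ℝ}

lemma maxOrbitIntegral_add (hφ : IsMeasurePreservingFlow μ φ)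
    (hx : LocallyIntegrable fun t => f (φ t x)) (hs : 0 ≤ s) (hS : 0 ≤ S) :
    maxOrbitIntegral φ f (s + S) x =
      max (maxOrbitIntegral φ f s x)
        (orbitIntegral φ f s x + maxOrbitIntegral φ f S (φ s x)) := by
  have hshift := (OrderIso.addLeft (orbitIntegral φ f s x)).isLUB_image'.2
    (isLUB_maxOrbitIntegral ((hφ.locallyIntegrable_apply_iff s).2 hx) hS)
  have hIcc : Icc 0 (s + S) = Icc 0 s ∪ (fun t => s + t) '' Icc 0 S := by
    rw [image_const_add_Icc, add_zero, Icc_union_Icc_eq_Icc hs (le_add_of_nonneg_right hS)]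
  refine (isLUB_maxOrbitIntegral hx (add_nonneg hs hS)).unique ?_
  simpa only [hIcc, image_union, image_image, hφ.orbitIntegral_add hx, OrderIso.addLeft_apply]
    using (isLUB_maxOrbitIntegral hx hs).union hshift

lemma measurable_maxOrbitIntegral (hφ : IsMeasurePreservingFlow μ φ) (hf : StronglyMeasurable f)
    (hL : ∀ x, LocallyIntegrable fun t => f (φ t x)) (hS : 0 ≤ S) :
    Measurable (maxOrbitIntegral φ f S) := by
  refine Measurable.isLUB (ι := ℚ) (f := fun q => orbitIntegral φ f (projIcc 0 S hS q))
    (fun q => (hφ.stronglyMeasurable_orbitIntegral hf _).measurable) fun x => ?_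
  set G : ℝ → ℝ := fun t => orbitIntegral φ f (projIcc 0 S hS t) x
  have hG : Continuous G :=
    (continuous_orbitIntegral (hL x)).comp (continuous_subtype_val.comp continuous_projIcc)
  have hrange : range G = (fun t => orbitIntegral φ f t x) '' Icc 0 S := by
    rw [show G = (fun t : Icc 0 S => orbitIntegral φ f t x) ∘ projIcc 0 S hS from rfl,
      (projIcc_surjective hS).range_comp, image_eq_range]
  have hdense : range G ⊆ closure (range fun q : ℚ => G q) := by
    simpa only [← range_comp, Function.comp_def] using
      hG.range_subset_closure_image_dense (Rat.denseRange_cast (𝕜 := ℝ))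
  exact (isLUB_iff_of_subset_of_subset_closure (range_comp_subset_range _ G) hdense).2
    (hrange ▸ isLUB_maxOrbitIntegral (hL x) hS)

lemma integrable_maxOrbitIntegral [SFinite μ] (hφ : IsMeasurePreservingFlow μ φ)
    (hf : StronglyMeasurable f) (hfi : Integrable f μ)
    (hL : ∀ x, LocallyIntegrable fun t => f (φ t x)) (hS : 0 ≤ S) :
    Integrable (maxOrbitIntegral φ f S) μ := by
  refine (hφ.integrable_orbitIntegral hfi.norm S).mono'
    (hφ.measurable_maxOrbitIntegral hf hL hS).aestronglyMeasurable (ae_of_all _ fun x => ?_)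
  rw [Real.norm_of_nonneg (maxOrbitIntegral_nonneg (hL x) hS)]
  exact maxOrbitIntegral_le_orbitIntegral_norm (hL x) hS

lemma integral_maxOrbitIntegral_sub_nonneg [SFinite μ] (hφ : IsMeasurePreservingFlow μ φ)
    (hf : StronglyMeasurable f) (hfi : Integrable f μ)
    (hL : ∀ x, LocallyIntegrable fun t => f (φ t x)) (hs : 0 ≤ s) (hS : 0 ≤ S) :
    0 ≤ ∫ x, (maxOrbitIntegral φ f (s + S) x - maxOrbitIntegral φ f S (φ s x)) ∂μ := by
  have hM {R : ℝ} (hR : 0 ≤ R) := hφ.integrable_maxOrbitIntegral hf hfi hL hR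
  have hpres := hφ.measurePreserving s
  have hMs : Integrable (fun x => maxOrbitIntegral φ f S (φ s x)) μ :=
    hpres.integrable_comp_of_integrable (hM hS)
  rw [integral_sub (hM (add_nonneg hs hS)) hMs,
    integral_comp_of_measurePreserving hpres (hM hS).1, sub_nonneg]
  exact integral_mono (hM hS) (hM (add_nonneg hs hS)) fun x =>
    maxOrbitIntegral_mono (hL x) hS (le_add_of_nonneg_left hs)

lemma maxOrbitIntegral_add_sub (hφ : IsMeasurePreservingFlow μ φ)
    (hx : LocallyIntegrable fun t => f (φ t x)) (hs : 0 ≤ s) (hS : 0 ≤ S) :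
    maxOrbitIntegral φ f (s + S) x - maxOrbitIntegral φ f S (φ s x) =
      max (maxOrbitIntegral φ f s x - maxOrbitIntegral φ f S (φ s x)) (orbitIntegral φ f s x) := by
  rw [hφ.maxOrbitIntegral_add hx hs hS, ← max_sub_sub_right, add_sub_cancel_right]

lemma norm_maxOrbitIntegral_add_sub_le (hφ : IsMeasurePreservingFlow μ φ)
    (hx : LocallyIntegrable fun t => f (φ t x)) (hs : 0 ≤ s) (hS : 0 ≤ S) :
    ‖maxOrbitIntegral φ f (s + S) x - maxOrbitIntegral φ f S (φ s x)‖ ≤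
      orbitIntegral φ (fun y => ‖f y‖) s x := by
  have hG := abs_le.1 (norm_orbitIntegral_le hx (right_mem_Icc.2 hs))
  have hMs := maxOrbitIntegral_le_orbitIntegral_norm hx hs
  have hMS := maxOrbitIntegral_nonneg ((hφ.locallyIntegrable_apply_iff s).2 hx) hS
  rw [hφ.maxOrbitIntegral_add_sub hx hs hS, Real.norm_eq_abs, abs_le]
  exact ⟨le_max_of_le_right hG.1, max_le (by linarith) hG.2⟩

lemma integral_nonneg_of_ae_not_bddAbove [SFinite μ] (hφ : IsMeasurePreservingFlow μ φ)
    (hf : StronglyMeasurable f) (hfi : Integrable f μ)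
    (hL : ∀ x, LocallyIntegrable fun t => f (φ t x))
    (hunb : ∀ᵐ x ∂μ, ¬BddAbove (range fun n : ℕ => maxOrbitIntegral φ f n x)) :
    0 ≤ ∫ x, f x ∂μ := by
  have hM (S : ℝ) (hS : 0 ≤ S) := hφ.measurable_maxOrbitIntegral hf hL hS
  suffices hlim : Tendsto
      (fun n : ℕ => ∫ x, (maxOrbitIntegral φ f (1 + n) x - maxOrbitIntegral φ f n (φ 1 x)) ∂μ)
      atTop (𝓝 (∫ x, orbitIntegral φ f 1 x ∂μ)) by
    rw [hφ.integral_orbitIntegral hfi, one_smul] at hlim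
    exact ge_of_tendsto' hlim fun n =>
      hφ.integral_maxOrbitIntegral_sub_nonneg hf hfi hL zero_le_one n.cast_nonneg
  refine tendsto_integral_of_dominated_convergence (orbitIntegral φ (fun y => ‖f y‖) 1)
    (fun n => ((hM _ (by positivity)).sub
      ((hM n n.cast_nonneg).comp (hφ.measurePreserving 1).measurable)).aestronglyMeasurable)
    (hφ.integrable_orbitIntegral hfi.norm 1)
    (fun n => ae_of_all _ fun x =>
      hφ.norm_maxOrbitIntegral_add_sub_le (hL x) zero_le_one n.cast_nonneg) ?_
  filter_upwards [(hφ.measurePreserving 1).quasiMeasurePreserving.ae hunb] with x hx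
  have hmono : Monotone fun n : ℕ => maxOrbitIntegral φ f n (φ 1 x) := fun n m hnm =>
    maxOrbitIntegral_mono (hL _) n.cast_nonneg (Nat.cast_le.2 hnm)
  have htop := tendsto_atTop_atTop_of_monotone' hmono hx
  refine tendsto_const_nhds.congr' ?_
  filter_upwards [htop.eventually_ge_atTop
    (maxOrbitIntegral φ f 1 x - orbitIntegral φ f 1 x)] with n hn
  rw [hφ.maxOrbitIntegral_add_sub (hL x) zero_le_one n.cast_nonneg,
    max_eq_right (by linarith)]

lemma isBoundedUnder_orbitIntegral_apply_iff (hφ : IsMeasurePreservingFlow μ φ)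
    (hx : LocallyIntegrable fun t => f (φ t x)) (s : ℝ) :
    (IsBoundedUnder (· ≤ ·) atTop fun t => orbitIntegral φ f t (φ s x)) ↔
      IsBoundedUnder (· ≤ ·) atTop fun t => orbitIntegral φ f t x := by
  have hshift (s : ℝ) {y : X} (hy : LocallyIntegrable fun t => f (φ t y)) :
      (IsBoundedUnder (· ≤ ·) atTop fun t => orbitIntegral φ f t y) →
        IsBoundedUnder (· ≤ ·) atTop fun t => orbitIntegral φ f t (φ s y) := by
    rintro ⟨b, hb⟩
    refine isBoundedUnder_of_eventually_le (a := b - orbitIntegral φ f s y) ?_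
    filter_upwards [(tendsto_atTop_add_const_left atTop s tendsto_id).eventually
      (eventually_map.1 hb)] with t ht
    rw [id, hφ.orbitIntegral_add hy] at ht
    linarith
  refine ⟨fun h => ?_, hshift s hx⟩
  simpa only [hφ.apply_neg_apply] using hshift (-s) ((hφ.locallyIntegrable_apply_iff s).2 hx) h

end MaxOrbitIntegral

end IsMeasurePreservingFlow

namespace IsErgodicFlow

variable [IsProbabilityMeasure μ] {f : X → ℝ}

lemma ae_isBoundedUnder_orbitIntegral (hφ : IsErgodicFlow μ φ) (hf : StronglyMeasurable f)
    (hfi : Integrable f μ) (hL : ∀ x, LocallyIntegrable fun t => f (φ t x))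
    (hneg : ∫ x, f x ∂μ < 0) :
    ∀ᵐ x ∂μ, IsBoundedUnder (· ≤ ·) atTop fun t => orbitIntegral φ f t x := by
  simp only [← bddAbove_range_maxOrbitIntegral_iff (hL _)]
  set B := {x | BddAbove (range fun n : ℕ => maxOrbitIntegral φ f n x)}
  have hB : MeasurableSet B := measurableSet_bddAbove_range fun n =>
    hφ.measurable_maxOrbitIntegral hf hL n.cast_nonneg
  have hinv (t : ℝ) : φ t ⁻¹' B = B := by
    ext x
    simp only [B, mem_preimage, mem_ofPred_eq, bddAbove_range_maxOrbitIntegral_iff (hL _),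
      hφ.isBoundedUnder_orbitIntegral_apply_iff (hL x)]
  rcases hφ.ergodic B hB hinv with hB0 | hB1
  · have hunb : ∀ᵐ x ∂μ, x ∉ B := measure_eq_zero_iff_ae_notMem.1 hB0
    exact absurd (hφ.integral_nonneg_of_ae_not_bddAbove hf hfi hL hunb) hneg.not_ge
  · exact (mem_ae_iff_prob_eq_one hB).2 hB1

lemma ae_eventually_average_lt (hφ : IsErgodicFlow μ φ) (hf : Integrable f μ) {c : ℝ}
    (hc : ∫ x, f x ∂μ < c) :
    ∀ᵐ x ∂μ, ∀ᶠ T in atTop, T⁻¹ * orbitIntegral φ f T x < c := by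
  obtain ⟨d, hd, hdc⟩ := exists_between hc
  have hfd : Integrable (fun x => f x - d) μ := hf.sub (integrable_const d)
  obtain ⟨g, hg, hfg, hgL⟩ := hφ.exists_stronglyMeasurable_locallyIntegrable hfd
  have hneg : ∫ x, g x ∂μ < 0 := by
    rw [← integral_congr_ae hfg, integral_sub hf (integrable_const d), integral_const]
    simpa using hd
  filter_upwards [hφ.ae_isBoundedUnder_orbitIntegral hg (hfd.congr hfg) hgL hneg,
    hφ.ae_ae_eq hfg, hφ.ae_locallyIntegrable hf] with x ⟨b, hb⟩ hx hfx
  have hgf (T : ℝ) : orbitIntegral φ g T x = orbitIntegral φ f T x - T * d := by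
    rw [orbitIntegral, ← intervalIntegral.integral_congr_ae (hx.mono fun t ht _ => ht),
      intervalIntegral.integral_sub
        (intervalIntegrable_of_locallyIntegrable hfx 0 T) intervalIntegrable_const,
      intervalIntegral.integral_const, sub_zero, smul_eq_mul, orbitIntegral]
  have hlin : Tendsto (fun T => T * (c - d)) atTop atTop :=
    tendsto_id.atTop_mul_const (sub_pos.2 hdc)
  filter_upwards [eventually_map.1 hb, hlin.eventually_gt_atTop b, eventually_gt_atTop 0]
    with T hT hbT hT0
  rw [inv_mul_lt_iff₀ hT0]
  linarith [hgf T]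

lemma ae_forall_eventually_average_lt (hφ : IsErgodicFlow μ φ) (hf : Integrable f μ) :
    ∀ᵐ x ∂μ, ∀ c, ∫ y, f y ∂μ < c → ∀ᶠ T in atTop, T⁻¹ * orbitIntegral φ f T x < c := by
  have hrat : ∀ᵐ x ∂μ, ∀ q : ℚ, ∫ y, f y ∂μ < q →
      ∀ᶠ T in atTop, T⁻¹ * orbitIntegral φ f T x < q :=
    ae_all_iff.2 fun q => eventually_imp_distrib_left.2 (hφ.ae_eventually_average_lt hf)
  filter_upwards [hrat] with x hx c hc
  obtain ⟨q, hq, hqc⟩ := exists_rat_btwn hc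
  exact (hx q hq).mono fun T hT => hT.trans hqc

theorem ae_tendsto_average (hφ : IsErgodicFlow μ φ) (hf : Integrable f μ) :
    ∀ᵐ x ∂μ, Tendsto (fun T => T⁻¹ * orbitIntegral φ f T x) atTop (𝓝 (∫ y, f y ∂μ)) := by
  filter_upwards [hφ.ae_forall_eventually_average_lt hf,
    hφ.ae_forall_eventually_average_lt hf.neg] with x hupper hlower
  refine tendsto_order.2 ⟨fun c hc => ?_, hupper⟩
  refine (hlower (-c) (by simpa [integral_neg] using hc)).mono fun T hT => ?_
  simpa [orbitIntegral] using hT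

end IsErgodicFlow

end Flow

end Orbits

theorem weighted_birkhoff_pointwise_ergodic_general {X : Type*} [MeasurableSpace X] {μ : Measure X}
    [IsProbabilityMeasure μ] {h : ℝ → X → X} (hh : IsErgodicFlow μ h) {ψ w : ℝ → ℝ}
    (hψ : ContinuousOn ψ (Ici 0)) (hw : IsDoublingWeight w) (hψw : ψ ~[atTop] w) {f : X → ℝ}
    (hf : Integrable f μ) :
    ∀ᵐ x ∂μ, Tendsto
      (fun T : ℝ => (∫ t in (0)..T, ψ t)⁻¹ * ∫ t in (0)..T, f (h (-t) x) * ψ t)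
      atTop (𝓝 (∫ y, f y ∂μ)) := by
  filter_upwards [hh.reverse.ae_locallyIntegrable hf, hh.reverse.ae_tendsto_average hf,
    hh.reverse.ae_tendsto_average hf.norm] with x hloc hmean hmean_norm
  have hO : (fun T => ∫ t in (0)..T, ‖f (h (-t) x)‖) =O[atTop] fun T => T :=
    isBigO_of_div_tendsto_nhds ((eventually_ne_atTop 0).mono fun T hT h => absurd h hT) _
      (hmean_norm.congr fun T => inv_mul_eq_div T _)
  simpa only [smul_eq_mul, mul_comm] using
    hw.tendsto_weighted_average hψ hψw (hloc.locallyIntegrableOn _) hmean hO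

end

/-- **Polynomially weighted Birkhoff pointwise ergodic theorem for flows.**
Let `(h_t)` be a jointly measurable measure-preserving ergodic flow on a standard
probability space `(X,μ)` and let `ψ : [0,∞) → [0,∞)` be continuous with
`|ψ(t) − C t^κ| ≤ C₁ (1 + t^{κ'})` for constants `C > 0`, `κ > κ' > 0`, `C₁ ≥ 0`.
Then for every `f ∈ L¹(X,μ)` the weighted averages
`A_T f(x) = (∫_0^T ψ)⁻¹ ∫_0^T f(h_{-t} x) ψ(t) dt` converge to `∫ f dμ` for
`μ`-a.e. `x` as `T → ∞`. -/
theorem weighted_birkhoff_pointwise_ergodic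
    (X : Type) [MeasurableSpace X] [StandardBorelSpace X]
    (μ : Measure X) [IsProbabilityMeasure μ]
    (h : ℝ → X → X)
    (h_zero : ∀ x, h 0 x = x)
    (h_add : ∀ s t x, h (s + t) x = h s (h t x))
    (h_meas : Measurable fun q : ℝ × X => h q.1 q.2)
    (h_mp : ∀ t : ℝ, MeasurePreserving (h t) μ μ)
    (h_erg : ∀ s : Set X, MeasurableSet s → (∀ t : ℝ, h t ⁻¹' s = s) → μ s = 0 ∨ μ s = 1)
    (ψ : ℝ → ℝ)
    (hψ_cont : ContinuousOn ψ (Set.Ici 0))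
    (hψ_nonneg : ∀ t : ℝ, 0 ≤ t → 0 ≤ ψ t)
    (C κ κ' C₁ : ℝ) (hC : 0 < C) (hκ'pos : 0 < κ') (hκ : κ' < κ) (hC₁ : 0 ≤ C₁)
    (hbound : ∀ t : ℝ, 0 ≤ t → |ψ t - C * t ^ κ| ≤ C₁ * (1 + t ^ κ'))
    (f : X → ℝ) (hf : Integrable f μ) :
    ∀ᵐ x ∂μ, Tendsto
      (fun T : ℝ => (∫ t in (0:ℝ)..T, ψ t)⁻¹ * ∫ t in (0:ℝ)..T, f (h (-t) x) * ψ t)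
      atTop (𝓝 (∫ y, f y ∂μ)) :=
  weighted_birkhoff_pointwise_ergodic_general ⟨⟨h_zero, h_add, h_meas, h_mp⟩, h_erg⟩ hψ_cont
    (isDoublingWeight_const_mul_rpow hC (hκ'pos.trans hκ).le)
    (isEquivalent_const_mul_rpow_of_abs_sub_le hC.ne' (hκ'pos.trans hκ) hκ hbound) hf
end
end

section
/- Let ψ : [0,∞) → [0,∞) be a continuous function for which there exist constants C > 0, κ > κ' > 0 and C₁ ≥ 0 with |ψ(t) − C t^κ| ≤ C₁ (1 + t^{κ'}) for all t ≥ 0. Then for all b > 0 and ε > 0, the ratio (∫_0^{2 sinh(br)} ψ(t) dt) / (∫_{2 sinh(br)}^{2 sinh(b(r+ε))} ψ(t) dt) converges, as r → ∞, to 1 / (e^{(κ+1)bε} − 1). -/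
open Filter Topology

noncomputable section

/-!
Writing `F x = ∫ t in 0..x, ψ t`, `x = 2 * sinh (b * r)` and `y = 2 * sinh (b * (r + ε))`, the ratio
is `F x / (F y - F x)`, which depends only on `F y / F x`. The growth condition says
`ψ t ~ C * t ^ κ`, and equivalence of integrands passes to divergent integrals, so
`F x ~ C / (κ + 1) * x ^ (κ + 1)`. As `2 * sinh s ~ exp s`, the ball of radius `r` has mass
`~ C / (κ + 1) * exp ((κ + 1) * b * r)`, and increasing `r` by `ε` multiplies this by
`exp ((κ + 1) * b * ε)`.
-/

open Asymptotics MeasureTheory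

section IntegralAsymptotics

variable {μ : Measure ℝ} {a : ℝ} {g : ℝ → ℝ}

lemma isLittleO_intervalIntegral_atTop {E : Type*} [NormedAddCommGroup E] [NormedSpace ℝ E]
    {f : ℝ → E} (hf : ∀ x ≥ a, IntervalIntegrable f μ a x)
    (hg : ∀ x ≥ a, IntervalIntegrable g μ a x) (hg_nonneg : ∀ᶠ t in atTop, 0 ≤ g t)
    (hg_top : Tendsto (fun x ↦ ∫ t in a..x, g t ∂μ) atTop atTop) (hfg : f =o[atTop] g) :
    (fun x ↦ ∫ t in a..x, f t ∂μ) =o[atTop] fun x ↦ ∫ t in a..x, g t ∂μ := by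
  rw [isLittleO_iff]
  intro c hc
  obtain ⟨T, hT⟩ := eventually_atTop.1 <|
    (hfg.bound (half_pos hc)).and (hg_nonneg.and (eventually_ge_atTop a))
  have haT : a ≤ T := (hT T le_rfl).2.2
  have tail_le (x : ℝ) (hx : T ≤ x) :
      ‖∫ t in T..x, f t ∂μ‖ ≤ c / 2 * ((∫ t in a..x, g t ∂μ) - ∫ t in a..T, g t ∂μ) := by
    have hgx := hg x (haT.trans hx)
    rw [intervalIntegral.integral_interval_sub_left hgx (hg T haT),
      ← intervalIntegral.integral_const_mul]
    refine intervalIntegral.norm_integral_le_of_norm_le hx (ae_of_all _ fun t ht ↦ ?_)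
      (((hg T haT).symm.trans hgx).const_mul _)
    obtain ⟨hft, hgt, -⟩ := hT t ht.1.le
    rwa [Real.norm_of_nonneg hgt] at hft
  filter_upwards [eventually_ge_atTop T, hg_top.eventually_ge_atTop 0,
    (hg_top.const_mul_atTop (half_pos hc)).eventually_ge_atTop
      (‖∫ t in a..T, f t ∂μ‖ - c / 2 * ∫ t in a..T, g t ∂μ)] with x hx hgx head_le
  calc ‖∫ t in a..x, f t ∂μ‖
      = ‖(∫ t in a..T, f t ∂μ) + ∫ t in T..x, f t ∂μ‖ := by
        rw [intervalIntegral.integral_add_adjacent_intervals (hf T haT)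
          ((hf T haT).symm.trans (hf x (haT.trans hx)))]
    _ ≤ ‖∫ t in a..T, f t ∂μ‖ + ‖∫ t in T..x, f t ∂μ‖ := norm_add_le _ _
    _ ≤ c * ∫ t in a..x, g t ∂μ := by linarith [tail_le x hx]
    _ = c * ‖∫ t in a..x, g t ∂μ‖ := by rw [Real.norm_of_nonneg hgx]

lemma isEquivalent_intervalIntegral_atTop {f : ℝ → ℝ} (hf : ∀ x ≥ a, IntervalIntegrable f μ a x)
    (hg : ∀ x ≥ a, IntervalIntegrable g μ a x) (hg_nonneg : ∀ᶠ t in atTop, 0 ≤ g t)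
    (hg_top : Tendsto (fun x ↦ ∫ t in a..x, g t ∂μ) atTop atTop) (hfg : f ~[atTop] g) :
    (fun x ↦ ∫ t in a..x, f t ∂μ) ~[atTop] fun x ↦ ∫ t in a..x, g t ∂μ := by
  refine (isLittleO_intervalIntegral_atTop (fun x hx ↦ (hf x hx).sub (hg x hx)) hg hg_nonneg
    hg_top hfg.isLittleO).congr' ?_ EventuallyEq.rfl
  filter_upwards [eventually_ge_atTop a] with x hx
  exact intervalIntegral.integral_sub (hf x hx) (hg x hx)

end IntegralAsymptotics

section PowerGrowth

variable {f : ℝ → ℝ} {C κ : ℝ}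

lemma integral_rpow_isEquivalent_atTop (a : ℝ) (hκ : -1 < κ) :
    (fun x ↦ ∫ t in a..x, t ^ κ) ~[atTop] fun x ↦ x ^ (κ + 1) / (κ + 1) := by
  have hκ₁ : 0 < κ + 1 := by linarith
  have hdiv : Tendsto (fun x : ℝ ↦ x ^ (κ + 1) / (κ + 1)) atTop atTop :=
    (tendsto_rpow_atTop hκ₁).atTop_div_const hκ₁
  refine (IsEquivalent.refl.add_const_of_norm_tendsto_atTop (c := -(a ^ (κ + 1) / (κ + 1)))
    (tendsto_norm_atTop_atTop.comp hdiv)).congr_left (.of_forall fun x ↦ ?_)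
  simp only [integral_rpow (Or.inl hκ), ← sub_eq_add_neg, ← sub_div]

lemma integral_isEquivalent_rpow_atTop {a : ℝ} (hf : ∀ x ≥ a, IntervalIntegrable f volume a x)
    (hC : C ≠ 0) (hκ : -1 < κ) (hfC : f ~[atTop] fun t ↦ C * t ^ κ) :
    (fun x ↦ ∫ t in a..x, f t) ~[atTop] fun x ↦ C / (κ + 1) * x ^ (κ + 1) := by
  have hpow := integral_rpow_isEquivalent_atTop a hκ
  have hpow_top : Tendsto (fun x ↦ ∫ t in a..x, t ^ κ) atTop atTop :=
    hpow.symm.tendsto_atTop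
      ((tendsto_rpow_atTop (by linarith)).atTop_div_const (by linarith))
  -- Dividing by `C`, which may be negative, makes the comparison function nonnegative.
  have hscaled : (fun t ↦ C⁻¹ * f t) ~[atTop] fun t ↦ t ^ κ := by
    simpa [Pi.mul_def, hC] using (IsEquivalent.refl (u := fun _ ↦ C⁻¹)).mul hfC
  have hint := (isEquivalent_intervalIntegral_atTop (fun x hx ↦ (hf x hx).const_mul C⁻¹)
    (fun x _ ↦ intervalIntegral.intervalIntegrable_rpow' hκ)
    ((eventually_ge_atTop 0).mono fun t ht ↦ Real.rpow_nonneg ht κ) hpow_top hscaled).trans hpow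
  simpa [Pi.mul_def, hC, div_mul_eq_mul_div, mul_div_assoc] using
    (IsEquivalent.refl (u := fun _ ↦ C)).mul hint

lemma rpow_isLittleO_rpow_atTop {κ' : ℝ} (hκ' : κ' < κ) :
    (fun t : ℝ ↦ t ^ κ') =o[atTop] fun t : ℝ ↦ t ^ κ := by
  refine (isLittleO_iff_tendsto' ?_).2 ((tendsto_rpow_neg_atTop (sub_pos.2 hκ')).congr' ?_)
  · filter_upwards [eventually_gt_atTop 0] with t ht h
    exact absurd h (Real.rpow_pos_of_pos ht κ).ne'
  · filter_upwards [eventually_gt_atTop 0] with t ht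
    rw [neg_sub, Real.rpow_sub ht]

lemma one_add_rpow_isLittleO_rpow_atTop {κ' : ℝ} (hκ : 0 < κ) (hκ' : κ' < κ) :
    (fun t : ℝ ↦ 1 + t ^ κ') =o[atTop] fun t : ℝ ↦ t ^ κ :=
  (isLittleO_const_left.2 (.inr (tendsto_norm_atTop_atTop.comp (tendsto_rpow_atTop hκ)))).add
    (rpow_isLittleO_rpow_atTop hκ')

lemma isEquivalent_rpow_of_abs_sub_le {κ' C₁ : ℝ} (hC : C ≠ 0) (hκ : 0 < κ) (hκ' : κ' < κ)
    (hbound : ∀ᶠ t in atTop, |f t - C * t ^ κ| ≤ C₁ * (1 + t ^ κ')) :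
    f ~[atTop] fun t ↦ C * t ^ κ := by
  have herror : (fun t ↦ f t - C * t ^ κ) =O[atTop] fun t ↦ C₁ * (1 + t ^ κ') :=
    .of_bound 1 <| hbound.mono fun t ht ↦ by
      rw [one_mul]
      exact ht.trans (le_abs_self _)
  exact herror.trans_isLittleO
    (((one_add_rpow_isLittleO_rpow_atTop hκ hκ').const_mul_left C₁).const_mul_right hC)

end PowerGrowth

lemma two_mul_sinh_isEquivalent_exp_atTop :
    (fun s ↦ 2 * Real.sinh s) ~[atTop] Real.exp := by
  have hneg : (fun s : ℝ ↦ Real.exp (-s)) =o[atTop] Real.exp :=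
    Real.isLittleO_exp_comp_exp_comp.2 <| by
      simpa using tendsto_id.atTop_add_atTop tendsto_id
  refine (IsEquivalent.refl.sub_isLittleO hneg).congr_left (.of_forall fun s ↦ ?_)
  simp only [Pi.sub_apply, Real.sinh_eq]
  ring

lemma comp_two_mul_sinh_isEquivalent_exp {F : ℝ → ℝ} {A p : ℝ}
    (hF : F ~[atTop] fun x ↦ A * x ^ p) :
    (fun s ↦ F (2 * Real.sinh s)) ~[atTop] fun s ↦ A * Real.exp (p * s) := by
  have hsinh := two_mul_sinh_isEquivalent_exp_atTop
  have hpow : (fun s ↦ (2 * Real.sinh s) ^ p) ~[atTop] fun s ↦ Real.exp (p * s) := by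
    simpa [Pi.pow_def, ← Real.exp_mul, mul_comm p] using
      hsinh.rpow (r := p) fun s ↦ (Real.exp_pos s).le
  exact (hF.comp_tendsto (hsinh.symm.tendsto_atTop Real.tendsto_exp_atTop)).trans
    (IsEquivalent.refl.mul hpow)

lemma tendsto_shift_div_of_isEquivalent_exp {G : ℝ → ℝ} {A p : ℝ} (hA : A ≠ 0)
    (hG : G ~[atTop] fun s ↦ A * Real.exp (p * s)) (δ : ℝ) :
    Tendsto (fun s ↦ G (s + δ) / G s) atTop (𝓝 (Real.exp (p * δ))) := by
  have hshift := hG.comp_tendsto (tendsto_atTop_add_const_right atTop δ tendsto_id)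
  refine IsEquivalent.tendsto_const ((hshift.div hG).congr_right (.of_forall fun s ↦ ?_))
  simp only [Pi.div_apply, Function.comp_apply, id_eq, Function.const_apply, mul_add,
    Real.exp_add]
  field_simp

lemma tendsto_div_sub_of_tendsto_div {α 𝕜 : Type*} [NormedField 𝕜] {l : Filter α} {u v : α → 𝕜}
    {q : 𝕜} (hq₀ : q ≠ 0) (hq₁ : q ≠ 1) (h : Tendsto (fun i ↦ v i / u i) l (𝓝 q)) :
    Tendsto (fun i ↦ u i / (v i - u i)) l (𝓝 (1 / (q - 1))) := by
  refine (tendsto_const_nhds.div (h.sub_const 1) (sub_ne_zero.2 hq₁)).congr' ?_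
  filter_upwards [h.eventually_ne hq₀] with i hi
  have hu : u i ≠ 0 := (div_ne_zero_iff.1 hi).2
  simp only [Pi.div_apply, div_sub_one hu, one_div_div]

theorem ball_shell_mass_ratio_tendsto_general {ψ : ℝ → ℝ} {C κ b ε : ℝ}
    (hψ : ∀ x ≥ 0, IntervalIntegrable ψ volume 0 x) (hC : C ≠ 0) (hκ : -1 < κ)
    (hψC : ψ ~[atTop] fun t ↦ C * t ^ κ) (hb : 0 < b) (hε : ε ≠ 0) :
    Tendsto (fun r ↦
        (∫ t in 0..(2 * Real.sinh (b * r)), ψ t) /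
          ∫ t in (2 * Real.sinh (b * r))..(2 * Real.sinh (b * (r + ε))), ψ t)
      atTop (𝓝 (1 / (Real.exp ((κ + 1) * b * ε) - 1))) := by
  have hκ₁ : κ + 1 ≠ 0 := by linarith
  have hmass := comp_two_mul_sinh_isEquivalent_exp (integral_isEquivalent_rpow_atTop hψ hC hκ hψC)
  have hscale : Tendsto (fun r ↦ b * r) atTop atTop := tendsto_id.const_mul_atTop hb
  have hballs := (tendsto_shift_div_of_isEquivalent_exp (div_ne_zero hC hκ₁) hmass (b * ε)).comp
    hscale
  have hexp : Real.exp ((κ + 1) * (b * ε)) ≠ 1 := by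
    simp [Real.exp_eq_one_iff, hκ₁, hb.ne', hε]
  rw [mul_assoc]
  refine (tendsto_div_sub_of_tendsto_div (Real.exp_ne_zero _) hexp hballs).congr' ?_
  filter_upwards [eventually_ge_atTop 0, eventually_ge_atTop (-ε)] with r hr hrε
  have hball (s : ℝ) (hs : 0 ≤ s) := hψ (2 * Real.sinh (b * s))
    (mul_nonneg zero_le_two (Real.sinh_nonneg_iff.2 (mul_nonneg hb.le hs)))
  rw [← mul_add, intervalIntegral.integral_interval_sub_left (hball _ (by linarith)) (hball r hr)]

/-- **Asymptotic ratio of weighted masses of balls and shells.**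
Let `ψ : [0,∞) → [0,∞)` be continuous with `|ψ(t) − C t^κ| ≤ C₁ (1 + t^{κ'})` for
constants `C > 0`, `κ > κ' > 0`, `C₁ ≥ 0`.  Then for all `b > 0` and `ε > 0`,
`(∫_0^{2 sinh(br)} ψ) / (∫_{2 sinh(br)}^{2 sinh(b(r+ε))} ψ) → 1 / (e^{(κ+1)bε} − 1)`
as `r → ∞`. -/
theorem ball_shell_mass_ratio_tendsto
    (ψ : ℝ → ℝ)
    (hψ_cont : ContinuousOn ψ (Set.Ici 0))
    (hψ_nonneg : ∀ t : ℝ, 0 ≤ t → 0 ≤ ψ t)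
    (C κ κ' C₁ : ℝ) (hC : 0 < C) (hκ'pos : 0 < κ') (hκ : κ' < κ) (hC₁ : 0 ≤ C₁)
    (hbound : ∀ t : ℝ, 0 ≤ t → |ψ t - C * t ^ κ| ≤ C₁ * (1 + t ^ κ'))
    (b ε : ℝ) (hb : 0 < b) (hε : 0 < ε) :
    Tendsto (fun r : ℝ =>
        (∫ t in (0:ℝ)..(2 * Real.sinh (b * r)), ψ t) /
          (∫ t in (2 * Real.sinh (b * r))..(2 * Real.sinh (b * (r + ε))), ψ t))
      atTop (𝓝 (1 / (Real.exp ((κ + 1) * b * ε) - 1))) :=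
  ball_shell_mass_ratio_tendsto_general
    (fun x hx ↦ (hψ_cont.mono Set.Icc_subset_Ici_self).intervalIntegrable_of_Icc hx) hC.ne'
    (by linarith) (isEquivalent_rpow_of_abs_sub_le hC.ne' (hκ'pos.trans hκ) hκ
      ((eventually_ge_atTop 0).mono hbound)) hb hε.ne'
end
end
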